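/- arXiv:1410.0101 — 2 statements merged into one kernel-verified Lean document; each statement's English description precedes it below -/
import Mathlib

section
/- Let β ∈ ℝ/ℤ and let B : ℝ/ℤ → SL(2,ℝ) be continuous. Then (β, B) is uniformly hyperbolic if and only if the following uniform exponential growth condition holds: there exist c > 0 and ρ > 1 such that ‖B_n(x)‖ > c ρ^{|n|} for all n ∈ ℤ and all x ∈ ℝ/ℤ. -/
open scoped Real
open Matrix

noncomputable section

/-- 2×2 real matrices. -/
abbrev M2 : Type := Matrix (Fin 2) (Fin 2) ℝ

/-- Rotation matrix by angle θ. -/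
def rot (θ : ℝ) : M2 := !![Real.cos θ, -Real.sin θ; Real.sin θ, Real.cos θ]

/-- Euclidean norm of a vector in ℝ². -/
def vnorm (w : Fin 2 → ℝ) : ℝ := ‖(WithLp.equiv 2 (Fin 2 → ℝ)).symm w‖

/-- Operator norm of a 2×2 real matrix acting on Euclidean ℝ². -/
def opNorm (A : M2) : ℝ := ‖Matrix.toEuclideanCLM (𝕜 := ℝ) A‖

/-- Forward iterates B_n(x) = B(x+(n-1)β)⋯B(x+β)B(x). -/
def fwdIter (β : ℝ) (B : ℝ → M2) : ℕ → ℝ → M2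
  | 0, _ => 1
  | n + 1, x => B (x + n * β) * fwdIter β B n x

/-- Cocycle iterates indexed by ℤ: B₀ = Id, B_n for n ≥ 1 as above, and
B_n(x) = [B_{-n}(x+nβ)]⁻¹ for n ≤ -1. -/
def cocycleIter (β : ℝ) (B : ℝ → M2) (n : ℤ) (x : ℝ) : M2 :=
  if 0 ≤ n then fwdIter β B n.toNat x else (fwdIter β B (-n).toNat (x + (n : ℝ) * β))⁻¹

/-- Uniform hyperbolicity of the cocycle (β, B) over the circle ℝ/ℤ
(B is understood as a 1-periodic function of x): there are invariant 1-periodic line fields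
s̄ (stable) and ū (unstable) with uniform exponential contraction forwards resp. backwards. -/
def IsUH (β : ℝ) (B : ℝ → M2) : Prop :=
  ∃ (s u : ℝ → Submodule ℝ (Fin 2 → ℝ)) (c ρ : ℝ),
    0 < c ∧ 1 < ρ ∧
    (∀ x, Module.finrank ℝ (s x) = 1 ∧ Module.finrank ℝ (u x) = 1) ∧
    (∀ x, s (x + 1) = s x ∧ u (x + 1) = u x) ∧
    (∀ x, (s x).map (Matrix.toLin' (B x)) = s (x + β) ∧
          (u x).map (Matrix.toLin' (B x)) = u (x + β)) ∧
    (∀ x, ∀ n : ℕ, 1 ≤ n →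
      (∀ w : Fin 2 → ℝ, w ∈ s x → vnorm w = 1 →
        vnorm ((cocycleIter β B n x) *ᵥ w) < c / ρ ^ n) ∧
      (∀ w : Fin 2 → ℝ, w ∈ u x → vnorm w = 1 →
        vnorm ((cocycleIter β B (-(n : ℤ)) x) *ᵥ w) < c / ρ ^ n))

/-- The Diophantine condition DC_{τ,γ}. -/
def DCwith (τ γ α : ℝ) : Prop :=
  ∀ p q : ℤ, q ≠ 0 → γ / |(q : ℝ)| ^ τ ≤ |α - (p : ℝ) / (q : ℝ)|

/-- The Diophantine condition DC_τ = ∪_{γ>0} DC_{τ,γ}. -/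
def DC (τ α : ℝ) : Prop := ∃ γ > 0, DCwith τ γ α

/-- Condition (V) for a 1-periodic potential: C², the derivative vanishes at exactly two
points of the circle, one a global minimum and the other a global maximum, both
non-degenerate. -/
def ConditionV (v : ℝ → ℝ) : Prop :=
  ContDiff ℝ 2 v ∧
  ∃ z₁ z₂ : ℝ, z₁ ∈ Set.Ico (0 : ℝ) 1 ∧ z₂ ∈ Set.Ico (0 : ℝ) 1 ∧ z₁ ≠ z₂ ∧
    (∀ x ∈ Set.Ico (0 : ℝ) 1, deriv v x = 0 ↔ x = z₁ ∨ x = z₂) ∧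
    (∀ x, v z₁ ≤ v x) ∧ (∀ x, v x ≤ v z₂) ∧
    iteratedDeriv 2 v z₁ ≠ 0 ∧ iteratedDeriv 2 v z₂ ≠ 0

/-- The Schrödinger cocycle map A^{(E-λv)}. -/
def schCocycle (lam : ℝ) (v : ℝ → ℝ) (E : ℝ) (x : ℝ) : M2 :=
  !![E - lam * v x, -1; 1, 0]

/-! ### Planar linear algebra -/

lemma vnorm_sq (w : Fin 2 → ℝ) : vnorm w ^ 2 = w 0 ^ 2 + w 1 ^ 2 := by
  simp [vnorm, EuclideanSpace.real_norm_sq_eq]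

lemma vnorm_nonneg (w : Fin 2 → ℝ) : 0 ≤ vnorm w := norm_nonneg _

lemma vnorm_pos {w : Fin 2 → ℝ} (hw : w ≠ 0) : 0 < vnorm w := by
  simpa [vnorm] using hw

lemma vnorm_add_le (v w : Fin 2 → ℝ) : vnorm (v + w) ≤ vnorm v + vnorm w :=
  norm_add_le (WithLp.toLp 2 v) (WithLp.toLp 2 w)

lemma vnorm_smul (r : ℝ) (w : Fin 2 → ℝ) : vnorm (r • w) = |r| * vnorm w :=
  norm_smul r (WithLp.toLp 2 w)

lemma continuous_vnorm : Continuous vnorm :=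
  (PiLp.continuous_toLp 2 (fun _ : Fin 2 => ℝ)).norm

lemma vnorm_mulVec_le (A : M2) (w : Fin 2 → ℝ) : vnorm (A *ᵥ w) ≤ opNorm A * vnorm w :=
  (Matrix.toEuclideanCLM (𝕜 := ℝ) A).le_opNorm (WithLp.toLp 2 w)

lemma opNorm_le {A : M2} {K : ℝ} (hK : 0 ≤ K) (h : ∀ w, vnorm (A *ᵥ w) ≤ K * vnorm w) :
    opNorm A ≤ K :=
  ContinuousLinearMap.opNorm_le_bound _ hK fun w => h (WithLp.ofLp w)

lemma opNorm_one : opNorm 1 = 1 := by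
  simp [opNorm]

/-- Cauchy–Schwarz in the plane. -/
lemma abs_dot_le (v w : Fin 2 → ℝ) : |v 0 * w 0 + v 1 * w 1| ≤ vnorm v * vnorm w := by
  refine abs_le_of_sq_le_sq ?_ (mul_nonneg (vnorm_nonneg _) (vnorm_nonneg _))
  rw [mul_pow, vnorm_sq, vnorm_sq]
  nlinarith [sq_nonneg (v 0 * w 1 - v 1 * w 0)]

/-- The area of a parallelogram is at most the product of its sides. -/
lemma abs_area_le (v w : Fin 2 → ℝ) : |v 0 * w 1 - v 1 * w 0| ≤ vnorm v * vnorm w := by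
  refine abs_le_of_sq_le_sq ?_ (mul_nonneg (vnorm_nonneg _) (vnorm_nonneg _))
  rw [mul_pow, vnorm_sq, vnorm_sq]
  nlinarith [sq_nonneg (v 0 * w 0 + v 1 * w 1)]

lemma vnorm_le_opNorm_mul_vnorm_mulVec {A : M2} (hA : A.det = 1) (w : Fin 2 → ℝ) :
    vnorm w ≤ opNorm A * vnorm (A *ᵥ w) := by
  rcases eq_or_ne w 0 with rfl | hw
  · simp [vnorm]
  have hJ : vnorm ![-w 1, w 0] = vnorm w := by
    rw [← sq_eq_sq₀ (vnorm_nonneg _) (vnorm_nonneg _), vnorm_sq, vnorm_sq]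
    simp; ring
  have h1 := abs_area_le (A *ᵥ w) (A *ᵥ ![-w 1, w 0])
  have h2 := vnorm_mulVec_le A ![-w 1, w 0]
  rw [hJ] at h2
  rw [Matrix.det_fin_two] at hA
  have h3 : (A *ᵥ w) 0 * (A *ᵥ ![-w 1, w 0]) 1 - (A *ᵥ w) 1 * (A *ᵥ ![-w 1, w 0]) 0
      = vnorm w ^ 2 := by
    rw [vnorm_sq]
    simp only [Matrix.mulVec, dotProduct, Fin.sum_univ_two, Matrix.cons_val_zero,
      Matrix.cons_val_one]
    linear_combination (w 0 ^ 2 + w 1 ^ 2) * hA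
  rw [h3, abs_of_nonneg (sq_nonneg _)] at h1
  have h4 := mul_le_mul_of_nonneg_left h2 (vnorm_nonneg (A *ᵥ w))
  have hp := vnorm_pos hw
  by_contra! hlt
  nlinarith

lemma opNorm_le_vnorm_col_add (A : M2) :
    opNorm A ≤ vnorm (A *ᵥ ![1, 0]) + vnorm (A *ᵥ ![0, 1]) := by
  refine opNorm_le (add_nonneg (vnorm_nonneg _) (vnorm_nonneg _)) fun w => ?_
  have hw : A *ᵥ w = w 0 • (A *ᵥ ![1, 0]) + w 1 • (A *ᵥ ![0, 1]) := by
    rw [← Matrix.mulVec_smul, ← Matrix.mulVec_smul, ← Matrix.mulVec_add]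
    congr 1
    ext i; fin_cases i <;> simp
  have h0 : |w 0| ≤ vnorm w := abs_le_of_sq_le_sq (by rw [vnorm_sq]; nlinarith [sq_nonneg (w 1)])
    (vnorm_nonneg _)
  have h1 : |w 1| ≤ vnorm w := abs_le_of_sq_le_sq (by rw [vnorm_sq]; nlinarith [sq_nonneg (w 0)])
    (vnorm_nonneg _)
  calc vnorm (A *ᵥ w) ≤ |w 0| * vnorm (A *ᵥ ![1, 0]) + |w 1| * vnorm (A *ᵥ ![0, 1]) := by
        rw [hw, ← vnorm_smul, ← vnorm_smul]; exact vnorm_add_le _ _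
    _ ≤ vnorm w * vnorm (A *ᵥ ![1, 0]) + vnorm w * vnorm (A *ᵥ ![0, 1]) :=
        add_le_add (mul_le_mul_of_nonneg_right h0 (vnorm_nonneg _))
          (mul_le_mul_of_nonneg_right h1 (vnorm_nonneg _))
    _ = _ := by ring

/-- A matrix of determinant one does not strictly expand every vector. -/
lemma exists_vnorm_mulVec_le {A : M2} (hA : A.det = 1) :
    ∃ w, vnorm w = 1 ∧ vnorm (A *ᵥ w) ≤ 1 := by
  suffices h : ∃ w : Fin 2 → ℝ, w ≠ 0 ∧ vnorm (A *ᵥ w) ≤ vnorm w by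
    obtain ⟨w, hw, h⟩ := h
    have hp := vnorm_pos hw
    refine ⟨(vnorm w)⁻¹ • w, ?_, ?_⟩
    · rw [vnorm_smul, abs_of_pos (inv_pos.2 hp), inv_mul_cancel₀ hp.ne']
    · rw [Matrix.mulVec_smul, vnorm_smul, abs_of_pos (inv_pos.2 hp), inv_mul_le_iff₀ hp, mul_one]
      exact h
  rw [Matrix.det_fin_two] at hA
  set p := A 0 0 ^ 2 + A 1 0 ^ 2 - 1 with hp
  set q := A 0 0 * A 0 1 + A 1 0 * A 1 1 with hq
  set r := A 0 1 ^ 2 + A 1 1 ^ 2 - 1 with hr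
  have key : p * r - q ^ 2 ≤ 0 := by
    have : p * r - q ^ 2 = 2 - (A 0 0 ^ 2 + A 1 0 ^ 2 + A 0 1 ^ 2 + A 1 1 ^ 2) := by
      rw [hp, hq, hr]
      linear_combination (A 0 0 * A 1 1 - A 0 1 * A 1 0 + 1) * hA
    nlinarith [sq_nonneg (A 0 0 - A 1 1), sq_nonneg (A 0 1 + A 1 0)]
  have hform : ∀ w : Fin 2 → ℝ, vnorm (A *ᵥ w) ^ 2 - vnorm w ^ 2
      = p * w 0 ^ 2 + 2 * q * w 0 * w 1 + r * w 1 ^ 2 := by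
    intro w
    rw [vnorm_sq, vnorm_sq, hp, hq, hr]
    simp only [Matrix.mulVec, dotProduct, Fin.sum_univ_two]
    ring
  have hle : ∀ w : Fin 2 → ℝ, p * w 0 ^ 2 + 2 * q * w 0 * w 1 + r * w 1 ^ 2 ≤ 0 →
      vnorm (A *ᵥ w) ≤ vnorm w := fun w h =>
    (sq_le_sq₀ (vnorm_nonneg _) (vnorm_nonneg _)).1 (by linarith [hform w])
  rcases le_or_gt p 0 with h | h
  · exact ⟨![1, 0], fun h0 => by simpa using congrFun h0 0, hle _ (by simpa using h)⟩
  · refine ⟨![-q, p], fun h0 => h.ne' (by simpa using congrFun h0 1), hle _ ?_⟩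
    simp only [Matrix.cons_val_zero, Matrix.cons_val_one]
    nlinarith

/-- A continuous periodic `SL(2, ℝ)`-valued map expands and contracts by a bounded factor. -/
lemma exists_expansion_bound {B : ℝ → M2} (hcont : Continuous B) (hper : Function.Periodic B 1)
    (hdet : ∀ x, (B x).det = 1) :
    ∃ M : ℝ, 1 ≤ M ∧ (∀ x w, vnorm (B x *ᵥ w) ≤ M * vnorm w) ∧
      ∀ x w, vnorm w ≤ M * vnorm (B x *ᵥ w) := by
  set F : ℝ → ℝ := fun x => B x 0 0 ^ 2 + B x 0 1 ^ 2 + B x 1 0 ^ 2 + B x 1 1 ^ 2 with hF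
  have hFc : Continuous F := by fun_prop
  have hFp : Function.Periodic F 1 := fun x => by simp only [hF, hper x]
  obtain ⟨R, hR⟩ := (hFp.isBounded_of_continuous one_ne_zero hFc).exists_norm_le
  have hFR : ∀ x, F x ≤ R := fun x => (le_abs_self _).trans (hR _ ⟨x, rfl⟩)
  have hR0 : 0 ≤ R := le_trans (by positivity) (hFR 0)
  have h1 : ∀ x w, vnorm (B x *ᵥ w) ≤ (R + 1) * vnorm w := by
    intro x w
    refine le_of_sq_le_sq ?_ (mul_nonneg (by positivity) (vnorm_nonneg _))
    have h : vnorm (B x *ᵥ w) ^ 2 ≤ F x * vnorm w ^ 2 := by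
      rw [vnorm_sq, vnorm_sq]
      simp only [Matrix.mulVec, dotProduct, Fin.sum_univ_two, hF]
      nlinarith [sq_nonneg (B x 0 0 * w 1 - B x 0 1 * w 0),
        sq_nonneg (B x 1 0 * w 1 - B x 1 1 * w 0)]
    rw [mul_pow]
    exact h.trans (mul_le_mul_of_nonneg_right (by nlinarith [hFR x]) (sq_nonneg _))
  exact ⟨R + 1, by linarith, h1, fun x w => (vnorm_le_opNorm_mul_vnorm_mulVec (hdet x) w).trans
    (mul_le_mul_of_nonneg_right (opNorm_le (by positivity) (h1 x)) (vnorm_nonneg _))⟩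

lemma exists_vnorm_eq_one_of_finrank {s : Submodule ℝ (Fin 2 → ℝ)} (hs : Module.finrank ℝ s = 1) :
    ∃ w ∈ s, vnorm w = 1 := by
  have hne : s ≠ ⊥ := by
    rintro rfl
    simp at hs
  obtain ⟨w, hw, h0⟩ := s.exists_mem_ne_zero_of_ne_bot hne
  have hp := vnorm_pos h0
  exact ⟨(vnorm w)⁻¹ • w, s.smul_mem _ hw, by
    rw [vnorm_smul, abs_of_pos (inv_pos.2 hp), inv_mul_cancel₀ hp.ne']⟩

/-- The vectors with bounded images under a sequence of matrices. -/
def boundedVectors (T : ℕ → M2) : Submodule ℝ (Fin 2 → ℝ) where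
  carrier := {w | ∃ C, ∀ n, vnorm (T n *ᵥ w) ≤ C}
  zero_mem' := ⟨0, fun n => by simp [vnorm]⟩
  add_mem' := by
    rintro v w ⟨C, hC⟩ ⟨D, hD⟩
    refine ⟨C + D, fun n => ?_⟩
    rw [Matrix.mulVec_add]
    exact (vnorm_add_le _ _).trans (add_le_add (hC n) (hD n))
  smul_mem' := by
    rintro r w ⟨C, hC⟩
    refine ⟨|r| * C, fun n => ?_⟩
    rw [Matrix.mulVec_smul, vnorm_smul]
    exact mul_le_mul_of_nonneg_left (hC n) (abs_nonneg _)

lemma mem_boundedVectors {T : ℕ → M2} {w : Fin 2 → ℝ} :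
    w ∈ boundedVectors T ↔ ∃ C, ∀ n, vnorm (T n *ᵥ w) ≤ C := Iff.rfl

lemma isCompact_unitCircle : IsCompact {w : Fin 2 → ℝ | vnorm w = 1} := by
  have h := (isCompact_sphere (0 : EuclideanSpace ℝ (Fin 2)) 1).image
    (PiLp.continuous_ofLp 2 (fun _ : Fin 2 => ℝ))
  convert h using 1
  ext w
  constructor
  · intro hw
    exact ⟨WithLp.toLp 2 w, by simpa [vnorm] using hw, rfl⟩
  · rintro ⟨v, hv, rfl⟩
    simpa [vnorm] using hv

/-- Unit vectors whose images stay bounded for longer and longer times accumulate at a unit vector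
whose images stay bounded for all times. -/
lemma exists_forall_vnorm_le {T : ℕ → M2} {K : ℝ}
    (h : ∀ n, ∃ w, vnorm w = 1 ∧ ∀ j ≤ n, vnorm (T j *ᵥ w) ≤ K) :
    ∃ w, vnorm w = 1 ∧ ∀ j, vnorm (T j *ᵥ w) ≤ K := by
  choose w hw hK using h
  obtain ⟨v, hv, φ, hφ, hlim⟩ := isCompact_unitCircle.tendsto_subseq hw
  refine ⟨v, hv, fun j => ?_⟩
  have hc : Continuous fun w : Fin 2 → ℝ => vnorm (T j *ᵥ w) :=
    continuous_vnorm.comp (Continuous.matrix_mulVec continuous_const continuous_id)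
  refine le_of_tendsto ((hc.tendsto v).comp hlim) ?_
  filter_upwards [Filter.eventually_ge_atTop j] with n hn
  exact hK (φ n) j (hn.trans (hφ.id_le n))

/-- If the norms of `T` are unbounded and unit vectors stay bounded for arbitrarily long times,
then the bounded vectors form a line. -/
lemma finrank_boundedVectors {T : ℕ → M2} {K : ℝ}
    (h : ∀ n, ∃ w, vnorm w = 1 ∧ ∀ j ≤ n, vnorm (T j *ᵥ w) ≤ K)
    (hT : ∀ C, ∃ n, C < opNorm (T n)) : Module.finrank ℝ (boundedVectors T) = 1 := by
  have hne_top : boundedVectors T ≠ ⊤ := by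
    intro htop
    obtain ⟨C, hC⟩ := mem_boundedVectors.1 (htop ▸ Submodule.mem_top : ![1, 0] ∈ boundedVectors T)
    obtain ⟨D, hD⟩ := mem_boundedVectors.1 (htop ▸ Submodule.mem_top : ![0, 1] ∈ boundedVectors T)
    obtain ⟨n, hn⟩ := hT (C + D)
    linarith [opNorm_le_vnorm_col_add (T n), hC n, hD n]
  have hne_bot : boundedVectors T ≠ ⊥ := by
    intro hbot
    obtain ⟨w, hw, hwK⟩ := exists_forall_vnorm_le h
    have : w ∈ boundedVectors T := ⟨K, hwK⟩
    rw [hbot, Submodule.mem_bot] at this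
    subst this
    simp [vnorm] at hw
  have h1 := Submodule.finrank_lt hne_top
  have h2 := Submodule.one_le_finrank_iff.2 hne_bot
  simp only [Module.finrank_fin_fun] at h1
  omega

/-! ### Positive sequences without approximate local maxima -/

lemma le_pow_mul_of_natAbs_le {a : ℤ → ℝ} {M : ℝ} (hM : 1 ≤ M) (ha : ∀ j, 0 ≤ a j)
    (h1 : ∀ j, a (j + 1) ≤ M * a j) (h2 : ∀ j, a j ≤ M * a (j + 1)) {i j : ℤ} {N : ℕ}
    (hij : (i - j).natAbs ≤ N) : a i ≤ M ^ N * a j := by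
  have hM0 : 0 ≤ M := by linarith
  have hup : ∀ (k : ℕ) (j : ℤ), a (j + k) ≤ M ^ k * a j := by
    intro k
    induction k with
    | zero => simp
    | succ k ih =>
      intro j
      have := h1 (j + k)
      push_cast
      rw [← add_assoc, pow_succ']
      nlinarith [ih j]
  have hdown : ∀ (k : ℕ) (j : ℤ), a j ≤ M ^ k * a (j + k) := by
    intro k
    induction k with
    | zero => simp
    | succ k ih =>
      intro j
      have := mul_le_mul_of_nonneg_left (h2 (j + k)) (pow_nonneg hM0 k)
      push_cast
      rw [← add_assoc, pow_succ]
      nlinarith [ih j]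
  have hpow : M ^ (i - j).natAbs * a j ≤ M ^ N * a j :=
    mul_le_mul_of_nonneg_right (pow_le_pow_right₀ hM hij) (ha j)
  refine le_trans ?_ hpow
  rcases le_total j i with h | h
  · have := hup (i - j).natAbs j
    rwa [show j + ((i - j).natAbs : ℤ) = i by omega] at this
  · have := hdown (i - j).natAbs i
    rwa [show i + ((i - j).natAbs : ℤ) = j by omega] at this

lemma le_pow_mul_max {a : ℤ → ℝ} {M : ℝ} {N : ℕ} (hM : 1 ≤ M) (ha : ∀ j, 0 < a j)
    (h1 : ∀ j, a (j + 1) ≤ M * a j) (h2 : ∀ j, a j ≤ M * a (j + 1))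
    (hN : ∀ j, ∃ k : ℤ, k.natAbs ≤ N ∧ 2 * a j ≤ a (j + k)) {n j : ℤ}
    (hj : 0 ≤ j) (hjn : j ≤ n) : a j ≤ M ^ N * max (a 0) (a n) := by
  obtain ⟨p, hp, hmax⟩ := (Finset.Icc (0 : ℤ) n).exists_max_image a
    ⟨j, Finset.mem_Icc.2 ⟨hj, hjn⟩⟩
  rw [Finset.mem_Icc] at hp
  have hMN : (0 : ℝ) ≤ M ^ N := by positivity
  have hle := fun j => (ha j).le
  refine (hmax j (Finset.mem_Icc.2 ⟨hj, hjn⟩)).trans ?_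
  by_cases hpN : p ≤ N
  · exact (le_pow_mul_of_natAbs_le hM hle h1 h2 (j := 0) (by omega)).trans
      (mul_le_mul_of_nonneg_left (le_max_left _ _) hMN)
  by_cases hpn : n - p ≤ N
  · exact (le_pow_mul_of_natAbs_le hM hle h1 h2 (j := n) (by omega)).trans
      (mul_le_mul_of_nonneg_left (le_max_right _ _) hMN)
  obtain ⟨k, hk, hpk⟩ := hN p
  have := hmax (p + k) (Finset.mem_Icc.2 ⟨by omega, by omega⟩)
  linarith [ha p]

/-- A sequence that is bounded on the nonnegative integers and doubles within every window of
radius `N` decays exponentially. -/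
lemma le_div_two_pow {a : ℤ → ℝ} {N : ℕ} {S : ℝ}
    (hN : ∀ j, ∃ k : ℤ, k.natAbs ≤ N ∧ 2 * a j ≤ a (j + k)) (hS : ∀ j, 0 ≤ j → a j ≤ S) (q : ℕ) :
    ∀ j : ℤ, (q * N : ℤ) ≤ j → a j ≤ S / 2 ^ q := by
  induction q with
  | zero => simpa using hS
  | succ q ih =>
    intro j hj
    obtain ⟨k, hk, hjk⟩ := hN j
    have := ih (j + k) (by push_cast at hj; rw [add_mul] at hj; omega)
    rw [pow_succ, ← div_div]
    linarith

lemma le_pow_mul_of_bounded {a : ℤ → ℝ} {M : ℝ} {N : ℕ} {S : ℝ} (hM : 1 ≤ M) (ha : ∀ j, 0 < a j)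
    (h1 : ∀ j, a (j + 1) ≤ M * a j) (h2 : ∀ j, a j ≤ M * a (j + 1))
    (hN : ∀ j, ∃ k : ℤ, k.natAbs ≤ N ∧ 2 * a j ≤ a (j + k)) (hS : ∀ j, 0 ≤ j → a j ≤ S)
    (j : ℤ) (hj : 0 ≤ j) : a j ≤ M ^ N * a 0 := by
  obtain ⟨q, hq⟩ := pow_unbounded_of_one_lt (S / a 0) (one_lt_two (α := ℝ))
  have h := le_div_two_pow hN hS q (max j (q * N)) (le_max_right _ _)
  have hle : a (max j (q * N)) ≤ a 0 := by
    refine h.trans ?_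
    rw [div_lt_iff₀ (ha 0)] at hq
    rw [div_le_iff₀ (by positivity)]
    linarith
  have := le_pow_mul_max hM ha h1 h2 hN hj (le_max_left j (q * N : ℤ))
  rwa [max_eq_left hle] at this

lemma exists_rate {N : ℕ} (hN : N ≠ 0) : ∃ ρ : ℝ, 1 < ρ ∧ ∀ n, ρ ^ n ≤ 2 * 2 ^ (n / N) := by
  refine ⟨(2 : ℝ) ^ (N : ℝ)⁻¹, Real.one_lt_rpow (by norm_num) (by positivity), fun n => ?_⟩
  have hρ : 1 ≤ (2 : ℝ) ^ (N : ℝ)⁻¹ := Real.one_le_rpow (by norm_num) (by positivity)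
  calc ((2 : ℝ) ^ (N : ℝ)⁻¹) ^ n ≤ ((2 : ℝ) ^ (N : ℝ)⁻¹) ^ (N * (n / N + 1)) :=
        pow_le_pow_right₀ hρ (Nat.lt_mul_div_succ n (Nat.pos_of_ne_zero hN)).le
    _ = 2 * 2 ^ (n / N) := by
        rw [pow_mul, Real.rpow_inv_natCast_pow (by norm_num) hN, pow_succ']

lemma lt_div_pow_of_bounded {a : ℤ → ℝ} {M : ℝ} {N : ℕ} {S ρ : ℝ} (hM : 1 ≤ M) (ha : ∀ j, 0 < a j)
    (h1 : ∀ j, a (j + 1) ≤ M * a j) (h2 : ∀ j, a j ≤ M * a (j + 1))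
    (hN : ∀ j, ∃ k : ℤ, k.natAbs ≤ N ∧ 2 * a j ≤ a (j + k)) (hS : ∀ j, 0 ≤ j → a j ≤ S)
    (h0 : a 0 = 1) (hρ : 0 < ρ) (hρN : ∀ n, ρ ^ n ≤ 2 * 2 ^ (n / N)) (n : ℕ) :
    a n < 3 * M ^ N / ρ ^ n := by
  have hb := le_pow_mul_of_bounded hM ha h1 h2 hN hS
  rw [h0, mul_one] at hb
  have h := le_div_two_pow hN hb (n / N) n (by exact_mod_cast Nat.div_mul_le_self n N)
  have hMN : 0 < M ^ N := by positivity
  rw [le_div_iff₀ (by positivity)] at h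
  rw [lt_div_iff₀ (by positivity)]
  nlinarith [mul_le_mul_of_nonneg_left (hρN n) (ha n).le]

lemma exists_forall_linear_le {c ρ : ℝ} (hc : 0 < c) (hρ : 1 < ρ) (p q : ℝ) :
    ∃ K : ℕ, ∀ L ≥ K, p + q * (L : ℝ) ≤ c * ρ ^ L := by
  have h0 := (tendsto_pow_const_div_const_pow_of_one_lt 0 hρ).const_mul p
  have h1 := (tendsto_pow_const_div_const_pow_of_one_lt 1 hρ).const_mul q
  have h := h0.add h1
  simp only [mul_zero, add_zero, pow_zero, pow_one] at h
  obtain ⟨K, hK⟩ := Filter.eventually_atTop.1 (h.eventually (gt_mem_nhds hc))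
  refine ⟨K, fun L hL => ?_⟩
  have := hK L hL
  have hpos : 0 < ρ ^ L := by positivity
  rw [← mul_div_assoc, ← mul_div_assoc, ← add_div, div_lt_iff₀ hpos] at this
  linarith

/-! ### Iterates and orbits -/

section Cocycle

variable {β : ℝ} {B : ℝ → M2}

lemma fwdIter_succ_right (n : ℕ) (x : ℝ) :
    fwdIter β B (n + 1) x = fwdIter β B n (x + β) * B x := by
  induction n with
  | zero => simp [fwdIter]
  | succ n ih =>
    rw [fwdIter, ih, fwdIter, Matrix.mul_assoc]
    congr 2
    push_cast
    ring

lemma det_fwdIter (hdet : ∀ x, (B x).det = 1) (n : ℕ) (x : ℝ) : (fwdIter β B n x).det = 1 := by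
  induction n with
  | zero => simp [fwdIter]
  | succ n ih => rw [fwdIter, Matrix.det_mul, ih, hdet, one_mul]

lemma cocycleIter_natCast (n : ℕ) (x : ℝ) : cocycleIter β B n x = fwdIter β B n x := by
  simp [cocycleIter]

lemma cocycleIter_zero (x : ℝ) : cocycleIter β B 0 x = 1 := by
  simp [cocycleIter, fwdIter]

lemma cocycleIter_neg_natCast (n : ℕ) (x : ℝ) :
    cocycleIter β B (-n) x = (fwdIter β B n (x - n * β))⁻¹ := by
  rcases Nat.eq_zero_or_pos n with rfl | hn
  · simp [cocycleIter, fwdIter]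
  · rw [cocycleIter, if_neg (by omega)]
    simp [sub_eq_add_neg]

lemma det_cocycleIter (hdet : ∀ x, (B x).det = 1) (n : ℤ) (x : ℝ) :
    (cocycleIter β B n x).det = 1 := by
  unfold cocycleIter
  split_ifs
  · exact det_fwdIter hdet _ _
  · simp [Matrix.det_nonsing_inv, det_fwdIter hdet]

lemma cocycleIter_add_one (hdet : ∀ x, (B x).det = 1) (n : ℤ) (x : ℝ) :
    cocycleIter β B (n + 1) x = B (x + n * β) * cocycleIter β B n x := by
  obtain ⟨k, rfl | rfl⟩ := n.eq_nat_or_neg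
  · rw [← Nat.cast_succ, cocycleIter_natCast, cocycleIter_natCast, fwdIter]
    simp
  · cases k with
    | zero => simp [cocycleIter, fwdIter]
    | succ k =>
      rw [show -((k + 1 : ℕ) : ℤ) + 1 = -(k : ℤ) by push_cast; ring, cocycleIter_neg_natCast,
        cocycleIter_neg_natCast, fwdIter_succ_right, Matrix.mul_inv_rev, ← Matrix.mul_assoc]
      have h1 : x + ((-((k + 1 : ℕ) : ℤ) : ℤ) : ℝ) * β = x - ((k + 1 : ℕ) : ℝ) * β := by
        push_cast; ring
      have h2 : x - ((k + 1 : ℕ) : ℝ) * β + β = x - k * β := by push_cast; ring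
      rw [h1, h2, Matrix.mul_nonsing_inv _ (by simp [hdet]), Matrix.one_mul]

lemma cocycleIter_add_one_right (hdet : ∀ x, (B x).det = 1) (n : ℤ) (x : ℝ) :
    cocycleIter β B (n + 1) x = cocycleIter β B n (x + β) * B x := by
  have hstep : ∀ n : ℤ, x + ((n + 1 : ℤ) : ℝ) * β = x + β + n * β := fun n => by push_cast; ring
  induction n using Int.induction_on with
  | zero => rw [cocycleIter_add_one hdet, cocycleIter_zero, cocycleIter_zero]; simp
  | succ n ih =>
    rw [cocycleIter_add_one hdet, ih, cocycleIter_add_one hdet, hstep, Matrix.mul_assoc]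
  | pred n ih =>
    have h1 := cocycleIter_add_one (β := β) hdet (-(n : ℤ) - 1 + 1) x
    have h2 := cocycleIter_add_one (β := β) hdet (-(n : ℤ) - 1) (x + β)
    rw [hstep] at h1
    rw [sub_add_cancel] at h1 h2 ⊢
    rw [ih, h2, Matrix.mul_assoc] at h1
    have hu : IsUnit (B (x + β + ((-(n : ℤ) - 1 : ℤ) : ℝ) * β)) := by
      rw [Matrix.isUnit_iff_isUnit_det, hdet]; exact isUnit_one
    exact (hu.mul_left_cancel h1).symm

lemma cocycleIter_add_period (hper : Function.Periodic B 1) (n : ℤ) (x : ℝ) :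
    cocycleIter β B n (x + 1) = cocycleIter β B n x := by
  have hfwd : ∀ (n : ℕ) (x : ℝ), fwdIter β B n (x + 1) = fwdIter β B n x := by
    intro n x
    induction n with
    | zero => rfl
    | succ n ih => rw [fwdIter, fwdIter, ih, add_right_comm, hper]
  unfold cocycleIter
  rw [add_right_comm, hfwd, hfwd]

lemma orbit_eq_fwdIter {x : ℝ} {v : ℤ → Fin 2 → ℝ} (hv : ∀ j : ℤ, v (j + 1) = B (x + j * β) *ᵥ v j)
    (m : ℤ) (k : ℕ) : v (m + k) = fwdIter β B k (x + m * β) *ᵥ v m := by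
  induction k with
  | zero => simp [fwdIter]
  | succ k ih =>
    rw [fwdIter, ← Matrix.mulVec_mulVec, ← ih, Nat.cast_succ, ← add_assoc, hv]
    congr 2
    push_cast
    ring

/-- If an orbit segment starts and ends near its minimal size, then the norm of the
corresponding iterate grows at most linearly in the length of the segment. -/
lemma opNorm_fwdIter_le (hdet : ∀ x, (B x).det = 1) {M : ℝ} (hM : 1 ≤ M)
    (hB : ∀ x w, vnorm (B x *ᵥ w) ≤ M * vnorm w) {y t D : ℝ} {L : ℕ} {v : Fin 2 → ℝ}
    (ht : 0 < t) (hlow : ∀ j ≤ L, t ≤ vnorm (fwdIter β B j y *ᵥ v))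
    (h0 : vnorm v ≤ D * t) (hL : vnorm (fwdIter β B L y *ᵥ v) ≤ D * t) :
    opNorm (fwdIter β B L y) ≤ 2 * D + D ^ 2 * M * L := by
  have hv0 : t ≤ vnorm v := by simpa [fwdIter] using hlow 0 (Nat.zero_le _)
  have hD : 0 < D := pos_of_mul_pos_left (ht.trans_le (hv0.trans h0)) ht.le
  refine opNorm_le (by positivity) fun z => ?_
  set V : ℕ → Fin 2 → ℝ := fun j => fwdIter β B j y *ᵥ v with hV
  set Z : ℕ → Fin 2 → ℝ := fun j => fwdIter β B j y *ᵥ z with hZ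
  set d : ℝ := v 0 * z 1 - v 1 * z 0 with hd
  have hVs : ∀ j, V (j + 1) = B (y + j * β) *ᵥ V j := fun j => by
    simp only [hV, fwdIter, Matrix.mulVec_mulVec]
  have hZs : ∀ j, Z (j + 1) = B (y + j * β) *ᵥ Z j := fun j => by
    simp only [hZ, fwdIter, Matrix.mulVec_mulVec]
  have harea : ∀ j, V j 0 * Z j 1 - V j 1 * Z j 0 = d := by
    intro j
    have h := det_fwdIter (β := β) hdet j y
    rw [Matrix.det_fin_two] at h
    simp only [hV, hZ, Matrix.mulVec, dotProduct, Fin.sum_univ_two]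
    linear_combination d * h
  have hdle : |d| ≤ vnorm v * vnorm z := abs_area_le v z
  set c : ℕ → ℝ := fun j => (V j 0 * Z j 0 + V j 1 * Z j 1) / vnorm (V j) ^ 2 with hc
  have hpos : ∀ j ≤ L, 0 < vnorm (V j) := fun j hj => ht.trans_le (hlow j hj)
  have hstep : ∀ j, j + 1 ≤ L → |c (j + 1)| ≤ |c j| + |d| * M / t ^ 2 := by
    intro j hj
    have hp := hpos j (by omega)
    have hq := hpos (j + 1) hj
    set A := B (y + j * β)
    set W : Fin 2 → ℝ := ![-V j 1, V j 0] with hW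
    have hWn : vnorm W = vnorm (V j) := by
      rw [← sq_eq_sq₀ (vnorm_nonneg _) (vnorm_nonneg _), vnorm_sq, vnorm_sq]
      simp [hW]; ring
    set e : ℝ := V (j + 1) 0 * (A *ᵥ W) 0 + V (j + 1) 1 * (A *ᵥ W) 1 with he
    have hele : |e| ≤ vnorm (V (j + 1)) * (M * vnorm (V j)) := by
      refine (abs_dot_le _ _).trans (mul_le_mul_of_nonneg_left ?_ (vnorm_nonneg _))
      rw [← hWn]; exact hB _ _
    have hid : (V (j + 1) 0 * Z (j + 1) 0 + V (j + 1) 1 * Z (j + 1) 1) * vnorm (V j) ^ 2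
        = (V j 0 * Z j 0 + V j 1 * Z j 1) * vnorm (V (j + 1)) ^ 2 + d * e := by
      rw [vnorm_sq, vnorm_sq, ← harea j, he, hVs, hZs]
      simp only [hW, Matrix.mulVec, dotProduct, Fin.sum_univ_two, Matrix.cons_val_zero,
        Matrix.cons_val_one]
      ring
    have hcc : c (j + 1) = c j + d * e / (vnorm (V j) ^ 2 * vnorm (V (j + 1)) ^ 2) := by
      simp only [hc]
      field_simp
      linear_combination hid
    have hbound : |d * e / (vnorm (V j) ^ 2 * vnorm (V (j + 1)) ^ 2)| ≤ |d| * M / t ^ 2 := by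
      rw [abs_div, abs_mul, abs_of_pos (a := vnorm (V j) ^ 2 * vnorm (V (j + 1)) ^ 2)
        (by positivity), div_le_div_iff₀ (by positivity) (by positivity)]
      have ht2 : t ^ 2 ≤ vnorm (V j) * vnorm (V (j + 1)) := by
        rw [sq]
        exact mul_le_mul (hlow j (by omega)) (hlow (j + 1) hj) ht.le hp.le
      calc |d| * |e| * t ^ 2
          ≤ |d| * (vnorm (V (j + 1)) * (M * vnorm (V j))) * (vnorm (V j) * vnorm (V (j + 1))) := by
            gcongr
        _ = |d| * M * (vnorm (V j) ^ 2 * vnorm (V (j + 1)) ^ 2) := by ring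
    rw [hcc]
    exact (abs_add_le _ _).trans (by linarith)
  have hc0 : |c 0| ≤ vnorm z / t := by
    have h := abs_dot_le v z
    simp only [hc, hV, hZ, fwdIter, Matrix.one_mulVec]
    rw [abs_div, abs_of_nonneg (sq_nonneg (vnorm v)),
      div_le_div_iff₀ (by nlinarith) ht]
    nlinarith [mul_le_mul_of_nonneg_right h ht.le, mul_le_mul_of_nonneg_left hv0
      (mul_nonneg (vnorm_nonneg v) (vnorm_nonneg z))]
  have hcj : ∀ j ≤ L, |c j| ≤ vnorm z / t + j * (|d| * M / t ^ 2) := by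
    intro j
    induction j with
    | zero => simpa using hc0
    | succ j ih =>
      intro hj
      have := hstep j hj
      have := ih (by omega)
      push_cast
      linarith
  have hpL := hpos L le_rfl
  have hZL : vnorm (Z L) ≤ |c L| * vnorm (V L) + |d| / vnorm (V L) := by
    refine le_of_sq_le_sq ?_ (by positivity)
    have hcL : c L * vnorm (V L) ^ 2 = V L 0 * Z L 0 + V L 1 * Z L 1 := by
      simp only [hc]; field_simp
    have hsq : vnorm (Z L) ^ 2 = (c L * vnorm (V L)) ^ 2 + (d / vnorm (V L)) ^ 2 := by
      have : vnorm (Z L) ^ 2 * vnorm (V L) ^ 2 = (c L * vnorm (V L) ^ 2) ^ 2 + d ^ 2 := by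
        rw [hcL, ← harea L, vnorm_sq, vnorm_sq]; ring
      field_simp
      linear_combination this
    rw [hsq, ← sq_abs (c L * _), ← sq_abs (d / _), abs_mul (c L), abs_div d, abs_of_pos hpL]
    nlinarith [show 0 ≤ |c L| * vnorm (V L) * (|d| / vnorm (V L)) by positivity]
  have hz := vnorm_nonneg z
  have hd' : |d| ≤ D * t * vnorm z := hdle.trans (mul_le_mul_of_nonneg_right h0 hz)
  calc vnorm (Z L) ≤ |c L| * vnorm (V L) + |d| / vnorm (V L) := hZL
    _ ≤ (vnorm z / t + L * (D * t * vnorm z * M / t ^ 2)) * (D * t) + D * t * vnorm z / t := by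
        gcongr
        · exact (hcj L le_rfl).trans (by gcongr)
        · exact hlow L le_rfl
    _ = (2 * D + D ^ 2 * M * L) * vnorm z := by field_simp; ring

/-- Uniform exponential growth forces every orbit to double within a uniform time window. -/
lemma exists_doubling_window (hdet : ∀ x, (B x).det = 1) {M : ℝ} (hM : 1 ≤ M)
    (hB : ∀ x w, vnorm (B x *ᵥ w) ≤ M * vnorm w) (hB' : ∀ x w, vnorm w ≤ M * vnorm (B x *ᵥ w))
    {c ρ : ℝ} (hc : 0 < c) (hρ : 1 < ρ)
    (hgrow : ∀ (n : ℕ) (x : ℝ), c * ρ ^ n < opNorm (fwdIter β B n x)) :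
    ∃ N : ℕ, N ≠ 0 ∧ ∀ (x : ℝ) (v : ℤ → Fin 2 → ℝ), (∀ j : ℤ, v (j + 1) = B (x + j * β) *ᵥ v j) →
      (∀ j, v j ≠ 0) → ∀ j, ∃ k : ℤ, k.natAbs ≤ N ∧ 2 * vnorm (v j) ≤ vnorm (v (j + k)) := by
  obtain ⟨K, hK⟩ := exists_forall_linear_le hc hρ (2 * M) (M ^ 2 * M)
  obtain ⟨N, hN⟩ := exists_forall_linear_le hc hρ (2 * (2 * M ^ K)) ((2 * M ^ K) ^ 2 * M)
  refine ⟨N + 1, Nat.succ_ne_zero N, fun x v hv hv0 i => ?_⟩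
  have hN' := hN (N + 1) (Nat.le_succ N)
  generalize N + 1 = N at hN' ⊢
  by_contra! hlt
  set a : ℤ → ℝ := fun j => vnorm (v j) with ha
  have hpos : ∀ j, 0 < a j := fun j => vnorm_pos (hv0 j)
  have h1 : ∀ j, a (j + 1) ≤ M * a j := fun j => by simp only [ha, hv j]; exact hB _ _
  have h2 : ∀ j, a j ≤ M * a (j + 1) := fun j => by simp only [ha, hv j]; exact hB' _ _
  have hratio := fun {p q : ℤ} {n : ℕ} =>
    le_pow_mul_of_natAbs_le (i := p) (j := q) (N := n) hM (fun j => (hpos j).le) h1 h2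
  have hsegment : ∀ (m : ℤ) (L : ℕ) (t D : ℝ), 0 < t → (∀ j ≤ L, t ≤ a (m + j)) →
      a m ≤ D * t → a (m + L) ≤ D * t → c * ρ ^ L < 2 * D + D ^ 2 * M * L := by
    intro m L t D ht hlow hm hmL
    refine (hgrow L (x + m * β)).trans_le
      (opNorm_fwdIter_le (v := v m) hdet hM hB ht (fun j hj => ?_) hm ?_)
    · rw [← orbit_eq_fwdIter hv]; exact hlow j hj
    · rw [← orbit_eq_fwdIter hv]; exact hmL
  have hMK : 0 < M ^ K := by positivity
  set t := a i / M ^ K with ht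
  have htpos : 0 < t := div_pos (hpos i) hMK
  have hti : 2 * M ^ K * t = 2 * a i := by rw [ht]; field_simp
  have hlt' : ∀ k : ℤ, k.natAbs ≤ N → a (i + k) ≤ 2 * M ^ K * t := fun k hk => by
    rw [hti]; exact (hlt k hk).le
  have hright : ∃ n : ℕ, a (i + n) < t := by
    by_contra! h
    exact absurd hN' (not_le.2 (hsegment i N t _ htpos (fun j _ => h j)
      (by simpa using hlt' 0 (by simp)) (hlt' N (by simp))))
  have hleft : ∃ n : ℕ, a (i - n) < t := by
    by_contra! h
    refine absurd hN' (not_le.2 (hsegment (i - N) N t _ htpos (fun j hj => ?_)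
      (by simpa [sub_eq_add_neg] using hlt' (-N) (by simp)) (by simpa using hlt' 0 (by simp))))
    have := h (N - j)
    rwa [Nat.cast_sub hj, show i - ((N : ℤ) - j) = i - N + j by ring] at this
  classical
  have hn := Nat.find_spec hright
  have hm := Nat.find_spec hleft
  have hn' : ∀ j < Nat.find hright, t ≤ a (i + j) := fun j hj => not_lt.1 (Nat.find_min hright hj)
  have hm' : ∀ j < Nat.find hleft, t ≤ a (i - j) := fun j hj => not_lt.1 (Nat.find_min hleft hj)
  generalize Nat.find hright = n at hn hn'
  generalize Nat.find hleft = m at hm hm'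
  have hKn : K ≤ n := by
    by_contra! h
    have := hratio (p := i) (q := i + n) (n := K) (by omega)
    rw [ht, lt_div_iff₀ hMK] at hn
    linarith
  have hend : ∀ p q : ℤ, (p - q).natAbs ≤ 1 → t ≤ a p → t / M ≤ a q := by
    intro p q hpq hp
    have := hratio hpq
    rw [div_le_iff₀ (by linarith)]
    linarith
  have htM : t / M ≤ t := div_le_self htpos.le hM
  have hi : t ≤ a i := div_le_self (hpos i).le (one_le_pow₀ hM)
  have hmpos : m ≠ 0 := by
    rintro rfl
    simp only [Nat.cast_zero, sub_zero] at hm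
    linarith
  have hnpos : n ≠ 0 := by
    rintro rfl
    simp only [Nat.cast_zero, add_zero] at hn
    linarith
  have hinner : ∀ p : ℤ, i - m < p → p < i + n → t ≤ a p := by
    intro p hp hp'
    rcases le_total i p with h | h
    · have := hn' (p - i).toNat (by omega)
      rwa [show i + ((p - i).toNat : ℤ) = p by omega] at this
    · have := hm' (i - p).toNat (by omega)
      rwa [show i - ((i - p).toNat : ℤ) = p by omega] at this
  have hMt : M * (t / M) = t := by field_simp
  refine absurd (hK (m + n) (by omega)) (not_le.2 (hsegment (i - m) (m + n) (t / M) M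
    (by positivity) (fun j hj => ?_) (by rw [hMt]; exact hm.le) ?_))
  · rcases Nat.eq_zero_or_pos j with rfl | hj0
    · exact hend (i - m + 1) _ (by omega) (hinner _ (by omega) (by omega))
    · rcases hj.lt_or_eq with hj | rfl
      · exact htM.trans (hinner _ (by omega) (by omega))
      · exact hend (i + n - 1) _ (by omega) (hinner _ (by omega) (by omega))
  · rw [hMt, show i - (m : ℤ) + ((m + n : ℕ) : ℤ) = i + n by push_cast; ring]
    exact hn.le

lemma map_boundedVectors_cocycleIter (hdet : ∀ x, (B x).det = 1) {M : ℝ} (hM : 1 ≤ M)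
    (hB : ∀ x w, vnorm (B x *ᵥ w) ≤ M * vnorm w) (hB' : ∀ x w, vnorm w ≤ M * vnorm (B x *ᵥ w))
    (σ : ℕ → ℤ) (x : ℝ) :
    (boundedVectors fun n => cocycleIter β B (σ n) x).map (Matrix.toLin' (B x))
      = boundedVectors fun n => cocycleIter β B (σ n) (x + β) := by
  have hM0 : 0 ≤ M := by linarith
  have hstep : ∀ n w, cocycleIter β B (σ n) (x + β) *ᵥ (B x *ᵥ w)
      = B (x + σ n * β) *ᵥ (cocycleIter β B (σ n) x *ᵥ w) := fun n w => by
    rw [Matrix.mulVec_mulVec, Matrix.mulVec_mulVec, ← cocycleIter_add_one_right hdet,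
      cocycleIter_add_one hdet]
  ext w
  simp only [Submodule.mem_map, mem_boundedVectors, Matrix.toLin'_apply]
  constructor
  · rintro ⟨w, ⟨C, hC⟩, rfl⟩
    refine ⟨M * C, fun n => ?_⟩
    rw [hstep]
    exact (hB _ _).trans (mul_le_mul_of_nonneg_left (hC n) hM0)
  · rintro ⟨C, hC⟩
    have hw : B x *ᵥ ((B x)⁻¹ *ᵥ w) = w := by
      rw [Matrix.mulVec_mulVec, Matrix.mul_nonsing_inv _ (by simp [hdet]), Matrix.one_mulVec]
    refine ⟨(B x)⁻¹ *ᵥ w, ⟨M * C, fun n => ?_⟩, hw⟩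
    have := hC n
    rw [← hw, hstep] at this
    exact (hB' _ _).trans (mul_le_mul_of_nonneg_left this hM0)

lemma exists_growth_of_isUH (hdet : ∀ x, (B x).det = 1) (h : IsUH β B) :
    ∃ c > (0 : ℝ), ∃ ρ > (1 : ℝ), ∀ n : ℤ, ∀ x : ℝ,
      c * ρ ^ n.natAbs < opNorm (cocycleIter β B n x) := by
  obtain ⟨s, u, c, ρ, hc, hρ, hrank, -, -, hdecay⟩ := h
  refine ⟨min (1 / c) (1 / 2), by positivity, ρ, hρ, fun n x => ?_⟩
  have hcontract : ∀ (n : ℤ) (k : ℕ) (w : Fin 2 → ℝ), vnorm w = 1 →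
      vnorm (cocycleIter β B n x *ᵥ w) < c / ρ ^ k →
      min (1 / c) (1 / 2) * ρ ^ k < opNorm (cocycleIter β B n x) := by
    intro n k w hw hk
    have hρk : 0 < ρ ^ k := by positivity
    have h := vnorm_le_opNorm_mul_vnorm_mulVec (det_cocycleIter (β := β) hdet n x) w
    rw [hw] at h
    refine (mul_le_mul_of_nonneg_right (min_le_left _ _) hρk.le).trans_lt ?_
    have hop : 0 < opNorm (cocycleIter β B n x) :=
      pos_of_mul_pos_left (one_pos.trans_le h) (vnorm_nonneg _)
    have := h.trans_lt (mul_lt_mul_of_pos_left hk hop)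
    rw [← mul_div_assoc, lt_div_iff₀ hρk, one_mul] at this
    rw [one_div, inv_mul_lt_iff₀ hc, mul_comm]
    exact this
  obtain ⟨k, rfl | rfl⟩ := n.eq_nat_or_neg
  all_goals
    rcases Nat.eq_zero_or_pos k with rfl | hk
    · have : min (1 / c) (1 / 2) < 1 := (min_le_right _ _).trans_lt (by norm_num)
      simpa only [Nat.cast_zero, neg_zero, Int.natAbs_zero, pow_zero, mul_one, cocycleIter_zero,
        opNorm_one] using this
  · obtain ⟨w, hws, hw⟩ := exists_vnorm_eq_one_of_finrank (hrank x).1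
    simpa using hcontract _ k w hw ((hdecay x k hk).1 w hws hw)
  · obtain ⟨w, hwu, hw⟩ := exists_vnorm_eq_one_of_finrank (hrank x).2
    simpa using hcontract _ k w hw ((hdecay x k hk).2 w hwu hw)

lemma isUH_of_growth (hcont : Continuous B) (hper : Function.Periodic B 1)
    (hdet : ∀ x, (B x).det = 1) {c ρ : ℝ} (hc : 0 < c) (hρ : 1 < ρ)
    (hgrow : ∀ n : ℤ, ∀ x : ℝ, c * ρ ^ n.natAbs < opNorm (cocycleIter β B n x)) :
    IsUH β B := by
  obtain ⟨M, hM, hB, hB'⟩ := exists_expansion_bound hcont hper hdet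
  obtain ⟨N, hN0, hN⟩ := exists_doubling_window (β := β) hdet hM hB hB' hc hρ fun n x => by
    simpa [cocycleIter_natCast] using hgrow n x
  obtain ⟨r, hr, hrN⟩ := exists_rate hN0
  -- every nonzero orbit, read forwards (`ε = 1`) or backwards (`ε = -1`), doubles within `N` steps
  set a : ℤ → ℝ → (Fin 2 → ℝ) → ℤ → ℝ := fun ε x w j => vnorm (cocycleIter β B (ε * j) x *ᵥ w)
    with ha
  have ha0 : ∀ ε x w, vnorm w = 1 → a ε x w 0 = 1 := fun ε x w hw => by
    simp only [ha, mul_zero, cocycleIter_zero, Matrix.one_mulVec, hw]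
  have hsucc : ∀ x w (j : ℤ), cocycleIter β B (j + 1) x *ᵥ w
      = B (x + j * β) *ᵥ (cocycleIter β B j x *ᵥ w) := fun x w j => by
    rw [cocycleIter_add_one hdet, Matrix.mulVec_mulVec]
  have hne : ∀ x w, vnorm w = 1 → ∀ j : ℤ, cocycleIter β B j x *ᵥ w ≠ 0 := by
    intro x w hw j h0
    have := vnorm_le_opNorm_mul_vnorm_mulVec (det_cocycleIter (β := β) hdet j x) w
    rw [h0, hw] at this
    norm_num [vnorm] at this
  have hpos : ∀ ε x w, vnorm w = 1 → ∀ j, 0 < a ε x w j := fun ε x w hw j =>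
    vnorm_pos (hne x w hw _)
  have hsteps : ∀ ε x w, (ε = 1 ∨ ε = -1) → (∀ j, a ε x w (j + 1) ≤ M * a ε x w j) ∧
      ∀ j, a ε x w j ≤ M * a ε x w (j + 1) := by
    rintro ε x w (rfl | rfl)
    · simp only [ha, one_mul]
      exact ⟨fun j => by rw [hsucc]; exact hB _ _, fun j => by rw [hsucc]; exact hB' _ _⟩
    · have hj : ∀ j : ℤ, -1 * j = -1 * (j + 1) + 1 := fun j => by ring
      simp only [ha]
      exact ⟨fun j => by rw [hj j, hsucc]; exact hB' _ _, fun j => by rw [hj j, hsucc]; exact hB _ _⟩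
  have hdouble : ∀ ε x w, (ε = 1 ∨ ε = -1) → vnorm w = 1 →
      ∀ j, ∃ k : ℤ, k.natAbs ≤ N ∧ 2 * a ε x w j ≤ a ε x w (j + k) := by
    rintro ε x w hε hw j
    obtain ⟨k, hk, hjk⟩ := hN x (fun j => cocycleIter β B j x *ᵥ w) (hsucc x w) (hne x w hw) (ε * j)
    refine ⟨ε * k, by rcases hε with rfl | rfl <;> simpa using hk, ?_⟩
    have : ε * (j + ε * k) = ε * j + k := by rcases hε with rfl | rfl <;> ring
    simp only [ha, this]
    exact hjk
  set E : ℤ → ℝ → Submodule ℝ (Fin 2 → ℝ) := fun ε x =>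
    boundedVectors fun n => cocycleIter β B (ε * n) x with hE
  have hrank : ∀ ε x, (ε = 1 ∨ ε = -1) → Module.finrank ℝ (E ε x) = 1 := by
    intro ε x hε
    refine finrank_boundedVectors (K := M ^ N) (fun n => ?_) fun C => ?_
    · obtain ⟨w, hw, hwn⟩ := exists_vnorm_mulVec_le (det_cocycleIter (β := β) hdet (ε * n) x)
      refine ⟨w, hw, fun j hj => ?_⟩
      have h := le_pow_mul_max hM (hpos ε x w hw) (hsteps ε x w hε).1 (hsteps ε x w hε).2
        (hdouble ε x w hε hw) (Int.natCast_nonneg j) (Int.ofNat_le.2 hj)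
      rw [ha0 ε x w hw, max_eq_left hwn, mul_one] at h
      exact h
    · obtain ⟨n, hn⟩ := pow_unbounded_of_one_lt (C / c) hρ
      refine ⟨n, lt_trans ?_ (hgrow (ε * n) x)⟩
      rw [div_lt_iff₀ hc] at hn
      have : (ε * (n : ℤ)).natAbs = n := by rcases hε with rfl | rfl <;> simp
      rw [this]
      linarith
  have hdecay : ∀ ε x w, (ε = 1 ∨ ε = -1) → w ∈ E ε x → vnorm w = 1 → ∀ n : ℕ,
      vnorm (cocycleIter β B (ε * n) x *ᵥ w) < 3 * M ^ N / r ^ n := by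
    rintro ε x w hε ⟨S, hS⟩ hw n
    refine lt_div_pow_of_bounded (a := a ε x w) (S := S) hM (hpos ε x w hw) (hsteps ε x w hε).1
      (hsteps ε x w hε).2 (hdouble ε x w hε hw) (fun j hj => ?_) (ha0 ε x w hw) (by linarith) hrN n
    lift j to ℕ using hj
    exact hS j
  have hperE : ∀ ε x, E ε (x + 1) = E ε x := fun ε x => by
    simp only [hE, cocycleIter_add_period hper]
  have hmap : ∀ ε x, (E ε x).map (Matrix.toLin' (B x)) = E ε (x + β) := fun ε x =>
    map_boundedVectors_cocycleIter hdet hM hB hB' _ x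
  refine ⟨E 1, E (-1), 3 * M ^ N, r, by positivity, hr,
    fun x => ⟨hrank 1 x (.inl rfl), hrank (-1) x (.inr rfl)⟩,
    fun x => ⟨hperE 1 x, hperE (-1) x⟩, fun x => ⟨hmap 1 x, hmap (-1) x⟩,
    fun x n _ => ⟨fun w hw hw1 => ?_, fun w hw hw1 => ?_⟩⟩
  · simpa using hdecay 1 x w (.inl rfl) hw hw1 n
  · simpa using hdecay (-1) x w (.inr rfl) hw hw1 n

end Cocycle

/-- Uniform hyperbolicity is equivalent to uniform exponential growth of the cocycle
iterates: there are c > 0 and ρ > 1 with ‖B_n(x)‖ > c ρ^{|n|} for all n ∈ ℤ, x ∈ ℝ/ℤ. -/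
theorem uh_iff_uniform_exponential_growth (β : ℝ) (B : ℝ → M2)
    (hcont : Continuous B) (hper : Function.Periodic B 1)
    (hdet : ∀ x, (B x).det = 1) :
    IsUH β B ↔ ∃ c > (0 : ℝ), ∃ ρ > (1 : ℝ), ∀ n : ℤ, ∀ x : ℝ,
      c * ρ ^ n.natAbs < opNorm (cocycleIter β B n x) := by
  exact ⟨exists_growth_of_isUH hdet, fun ⟨_, hc, _, hρ, hgrow⟩ =>
    isUH_of_growth hcont hper hdet hc hρ hgrow⟩
end
end

section
/- Fix constants C, c > 0 and a small β > 0. There is a constant C′ > 0 such that for all sufficiently small r ∈ (0,1) and all sufficiently large l₀ (with l₀ ≫ r⁻¹), the following holds. Let I = B(0,r), let l : I → ℝ be C² with l(x) > l₀ and |l^{(m)}(x)| < l(x)^{1+β} for m = 1,2. Let f₁ : I → ℝ/πℤ be of type I₊ with its zero at 0, let f₂ : I → ℝ/πℤ be of type I₋ with its zero at d, where 0 ≤ d ≤ 2r/3, and set f = arctan(l²·tan f₁) − π/2 + f₂ : I → ℝ/πℤ. Let X = {x ∈ I : |f(x)| = inf_{y∈I} |f(y)|} (distances measured in ℝ/πℤ);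 then X consists of at most two points, X = {x₁, x₂} with x₁ ≤ x₂, and: (1) |x₁| < C′ l₀^{−3/4} and |x₂ − d| < C′ l₀^{−3/4}; (2) if f(x₁) = f(x₂) = 0 then 0 < x₁ ≤ x₂ < d; (3) if f(x₁) = f(x₂) ≠ 0 then x₁ = x₂. -/
open scoped Real
open Matrix

noncomputable section

/-- Distance from a to 0 in ℝ/πℤ (we work with real-valued lifts of ℝP¹-valued functions). -/
def pDist (a : ℝ) : ℝ := ‖(a : AddCircle π)‖

/-- A C² function f (a real lift of a function into ℝ/πℤ) on the interval I = B(x̄, r) is of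
type I with (unique) zero x₀: C²-norm bounded by C, exactly one zero (mod π), located in (1/3)I;
f′ has at most one zero on I while |f′| > r² on B(x₀, r/2); and |f| > c r³ on the part of I
where f′·f′(x₀) ≤ 0. -/
def TypeOne (C c r xb x₀ : ℝ) (f : ℝ → ℝ) : Prop :=
  ContDiffOn ℝ 2 f (Metric.closedBall xb r) ∧
  (∀ x ∈ Metric.closedBall xb r,
      |f x| < C ∧ |deriv f x| < C ∧ |iteratedDeriv 2 f x| < C) ∧
  x₀ ∈ Metric.closedBall xb (r / 3) ∧
  ((f x₀ : AddCircle π) = 0) ∧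
  (∀ x ∈ Metric.closedBall xb r, ((f x : AddCircle π) = 0) → x = x₀) ∧
  (∀ x ∈ Metric.closedBall xb r, ∀ y ∈ Metric.closedBall xb r,
      deriv f x = 0 → deriv f y = 0 → x = y) ∧
  (∀ x ∈ Metric.closedBall x₀ (r / 2), r ^ 2 < |deriv f x|) ∧
  (∀ x ∈ Metric.closedBall xb r, deriv f x * deriv f x₀ ≤ 0 → c * r ^ 3 < pDist (f x))

/-- Type I₊ : type I with f′(x₀) > 0. -/
def TypeOnePlus (C c r xb x₀ : ℝ) (f : ℝ → ℝ) : Prop :=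
  TypeOne C c r xb x₀ f ∧ 0 < deriv f x₀

/-- Type I₋ : type I with f′(x₀) < 0. -/
def TypeOneMinus (C c r xb x₀ : ℝ) (f : ℝ → ℝ) : Prop :=
  TypeOne C c r xb x₀ f ∧ deriv f x₀ < 0

open Set

lemma pDist_eq_abs {a : ℝ} (h : |a| ≤ π / 2) : pDist a = |a| := by
  unfold pDist
  rw [AddCircle.norm_coe_eq_abs_iff π Real.pi_ne_zero, abs_of_pos Real.pi_pos]
  exact h

lemma pDist_le_abs (a : ℝ) : pDist a ≤ |a| := by
  by_cases h : |a| ≤ π / 2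
  · exact (pDist_eq_abs h).le
  · push Not at h
    have : pDist a ≤ |π| / 2 := AddCircle.norm_le_half_period π Real.pi_ne_zero
    rw [abs_of_pos Real.pi_pos] at this
    linarith

lemma pDist_congr {a b : ℝ} (h : (a : AddCircle π) = b) : pDist a = pDist b := by
  unfold pDist
  rw [h]

lemma pDist_neg (a : ℝ) : pDist (-a) = pDist a := by
  unfold pDist
  rw [AddCircle.coe_neg, norm_neg]

lemma coe_sub_pi (a : ℝ) : ((a - π : ℝ) : AddCircle π) = a := by
  rw [AddCircle.coe_sub, AddCircle.coe_period, sub_zero]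

lemma coe_add_pi (a : ℝ) : ((a + π : ℝ) : AddCircle π) = a := by
  rw [AddCircle.coe_add, AddCircle.coe_period, add_zero]

/-- A sum of a small number and a number in `[-π/2, π/2]` which is close to `0` modulo `π` is
close to `0`. -/
lemma abs_eq_pDist {E y : ℝ} (hE : |E| ≤ 1 / 8) (hy : |y| ≤ π / 2) (h : pDist (E + y) ≤ 1 / 4) :
    |E + y| = pDist (E + y) := by
  have hpi := Real.pi_gt_three
  rw [abs_le] at hE hy
  by_cases h1 : |E + y| ≤ π / 2
  · exact (pDist_eq_abs h1).symm
  · exfalso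
    push Not at h1
    rcases lt_abs.1 h1 with h2 | h2
    · rw [← pDist_congr (coe_sub_pi (E + y)),
        pDist_eq_abs (by rw [abs_le]; constructor <;> linarith)] at h
      rw [abs_le] at h
      linarith
    · rw [← pDist_congr (coe_add_pi (E + y)),
        pDist_eq_abs (by rw [abs_le]; constructor <;> linarith)] at h
      rw [abs_le] at h
      linarith

lemma cos_ge_of_abs_le_half {y : ℝ} (h : |y| ≤ 1 / 2) : 7 / 8 ≤ Real.cos y := by
  have := Real.one_sub_sq_div_two_le_cos (x := y)
  nlinarith [abs_le.1 h, sq_abs y, abs_nonneg y]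

lemma abs_tan_le {y : ℝ} (h : |y| ≤ 1 / 2) : |Real.tan y| ≤ 2 * |y| := by
  have hc := cos_ge_of_abs_le_half h
  have hs : |Real.sin y| ≤ |y| := Real.abs_sin_le_abs
  rw [Real.tan_eq_sin_div_cos, abs_div, abs_of_pos (by linarith : 0 < Real.cos y),
    div_le_iff₀ (by linarith)]
  nlinarith [abs_nonneg y]

lemma tan_sq_le {y : ℝ} (h : |y| ≤ 1 / 2) : Real.tan y ^ 2 ≤ 1 := by
  have := abs_tan_le h
  rw [sq_le_one_iff_abs_le_one]
  linarith

lemma hasDerivAt_tan_one_add_sq {y : ℝ} (h : |y| ≤ 1 / 2) :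
    HasDerivAt Real.tan (1 + Real.tan y ^ 2) y := by
  have hc := cos_ge_of_abs_le_half h
  have hc0 : Real.cos y ≠ 0 := by linarith
  convert Real.hasDerivAt_tan hc0 using 1
  rw [← Real.inv_one_add_tan_sq hc0, one_div, inv_inv]

lemma arctan_le_self_of_nonneg {y : ℝ} (h : 0 ≤ y) : Real.arctan y ≤ y := by
  have := Real.le_tan (Real.arctan_nonneg.2 h) (Real.arctan_lt_pi_div_two y)
  rwa [Real.tan_arctan] at this

/-- A `C²` function on `[-r, r]`, with first and second derivatives `G₁`, `G₂`, that vanishes at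
`x₀`, is increasing near `x₀`, and is bounded away from zero elsewhere. -/
structure Branch (C m r x₀ : ℝ) (G G₁ G₂ : ℝ → ℝ) : Prop where
  cont : ContinuousOn G (Icc (-r) r)
  hd1 : ∀ x ∈ Ioo (-r) r, HasDerivAt G (G₁ x) x
  hd2 : ∀ x ∈ Ioo (-r) r, HasDerivAt G₁ (G₂ x) x
  bd1 : ∀ x ∈ Ioo (-r) r, |G₁ x| ≤ C
  bd2 : ∀ x ∈ Ioo (-r) r, |G₂ x| ≤ C
  steep : ∀ x, |x - x₀| ≤ r / 2 → r ^ 2 ≤ G₁ x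
  upper : ∀ x ∈ Icc (-r) r, |G x| ≤ C * |x - x₀|
  near_right : ∀ x, x₀ ≤ x → x ≤ x₀ + r / 2 → r ^ 2 * (x - x₀) ≤ G x
  near_left : ∀ x, x ≤ x₀ → x₀ - r / 2 ≤ x → G x ≤ -(r ^ 2 * (x₀ - x))
  far_right : ∀ x ∈ Icc (-r) r, x₀ + r / 2 ≤ x → m ≤ G x
  far_left : ∀ x ∈ Icc (-r) r, x ≤ x₀ - r / 2 → G x ≤ -m

lemma le_of_le_of_deriv_neg {g : ℝ → ℝ} {a b m : ℝ} (hc : ContinuousOn g (Icc a b))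
    (hd : ∀ x ∈ Ioo a b, DifferentiableAt ℝ g x) (ha : m ≤ g a)
    (h : ∀ x ∈ Ioo a b, deriv g x < 0 → m ≤ g x) : ∀ x ∈ Icc a b, m ≤ g x := by
  intro x hx
  by_contra! hlt
  have hcx : ContinuousOn g (Icc a x) := hc.mono (Icc_subset_Icc_right hx.2)
  have hK : IsCompact (Icc a x ∩ g ⁻¹' Ici m) :=
    isCompact_Icc.of_isClosed_subset (hcx.preimage_isClosed_of_isClosed isClosed_Icc isClosed_Ici)
      inter_subset_left
  obtain ⟨y, ⟨hy, hgy⟩, hmax⟩ := hK.exists_isGreatest ⟨a, ⟨le_rfl, hx.1⟩, ha⟩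
  have hgy' : m ≤ g y := hgy
  have hyx : y < x := lt_of_le_of_ne hy.2 (by rintro rfl; linarith)
  obtain ⟨ξ, hξ, hs⟩ := exists_deriv_eq_slope g hyx (hcx.mono (Icc_subset_Icc_left hy.1))
    (fun z hz => (hd z ⟨by linarith [hy.1, hz.1], by linarith [hx.2, hz.2]⟩).differentiableWithinAt)
  have hneg : deriv g ξ < 0 := by
    rw [hs]
    exact div_neg_of_neg_of_pos (by linarith) (by linarith)
  have hξm := h ξ ⟨by linarith [hy.1, hξ.1], by linarith [hx.2, hξ.2]⟩ hneg
  have := hmax ⟨⟨by linarith [hy.1, hξ.1], hξ.2.le⟩, hξm⟩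
  linarith [hξ.1]

lemma TypeOne.neg {C c r xb x₀ : ℝ} {f : ℝ → ℝ} (h : TypeOne C c r xb x₀ f) :
    TypeOne C c r xb x₀ (-f) := by
  obtain ⟨h1, h2, h3, h4, h5, h6, h7, h8⟩ := h
  refine ⟨h1.neg, ?_, h3, ?_, ?_, ?_, ?_, ?_⟩
  · intro x hx
    simpa [deriv.neg, iteratedDeriv_neg] using h2 x hx
  · simpa using h4
  · intro x hx h
    exact h5 x hx (by simpa using h)
  · intro x hx y hy hx0 hy0
    exact h6 x hx y hy (by simpa [deriv.neg] using hx0) (by simpa [deriv.neg] using hy0)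
  · intro x hx
    simpa [deriv.neg] using h7 x hx
  · intro x hx h
    have := h8 x hx (by simpa [deriv.neg] using h)
    simpa [pDist_neg] using this

lemma TypeOnePlus.branch {C c r x₀ : ℝ} {f : ℝ → ℝ} (h : TypeOnePlus C c r 0 x₀ f)
    (hr : 0 < r) (hCr : C * r ≤ 1 / 16) :
    Branch C (min (1 / 2) c * r ^ 3) r x₀ (fun x => f x - f x₀) (deriv f) (deriv (deriv f)) := by
  obtain ⟨⟨h1, h2, h3, h4, h5, -, h7, h8⟩, hpos⟩ := h
  simp only [Real.closedBall_eq_Icc, zero_sub, zero_add] at h1 h2 h3 h5 h8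
  have hC : 0 < C := lt_of_le_of_lt (abs_nonneg _) (h2 0 ⟨by linarith, hr.le⟩).1
  have hx₀ : x₀ ∈ Ioo (-r) r := ⟨by linarith [h3.1], by linarith [h3.2]⟩
  have hat : ∀ x ∈ Ioo (-r) r, ContDiffAt ℝ 2 f x := fun x hx =>
    h1.contDiffAt (Icc_mem_nhds hx.1 hx.2)
  have hd1 : ∀ x ∈ Ioo (-r) r, HasDerivAt f (deriv f x) x := fun x hx =>
    ((hat x hx).differentiableAt (by norm_num)).hasDerivAt
  have hd2 : ∀ x ∈ Ioo (-r) r, HasDerivAt (deriv f) (deriv (deriv f) x) x := fun x hx =>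
    (((hat x hx).derivWithin (m := 1) (by norm_num)).differentiableAt (by norm_num)).hasDerivAt
  have hsub : ∀ x, |x - x₀| ≤ r / 2 → x ∈ Ioo (-r) r := fun x hx => by
    rw [abs_le] at hx
    exact ⟨by linarith [h3.1], by linarith [h3.2]⟩
  have hsubI : Ioo (-r) r ⊆ Icc (-r) r := Ioo_subset_Icc_self
  have hcont : ContinuousOn f (Icc (-r) r) := h1.continuousOn
  have hsteep : ∀ x, |x - x₀| ≤ r / 2 → r ^ 2 < deriv f x := by
    intro x hx
    have h7x := h7 x (by rw [Metric.mem_closedBall, Real.dist_eq]; exact hx)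
    rcases lt_abs.1 h7x with h | h
    · exact h
    exfalso
    have hcd : ContinuousOn (deriv f) (uIcc x x₀) := fun z hz => by
      refine (hd2 z (hsub z ?_)).continuousAt.continuousWithinAt
      exact (abs_sub_comm z x₀ ▸ abs_sub_right_of_mem_uIcc hz).trans (by rwa [abs_sub_comm] at hx)
    obtain ⟨z, hz, hz0⟩ := intermediate_value_uIcc hcd
      (show (0 : ℝ) ∈ uIcc (deriv f x) (deriv f x₀) from
        mem_uIcc.2 (Or.inl ⟨by nlinarith, hpos.le⟩))
    have h7z := h7 z (by
      rw [Metric.mem_closedBall, Real.dist_eq]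
      exact (abs_sub_comm z x₀ ▸ abs_sub_right_of_mem_uIcc hz).trans (by rwa [abs_sub_comm] at hx))
    rw [hz0, abs_zero] at h7z
    nlinarith
  have hlip : ∀ x ∈ Icc (-r) r, ∀ y ∈ Icc (-r) r, |f x - f y| ≤ C * |x - y| := by
    have key : ∀ x ∈ Icc (-r) r, ∀ y ∈ Icc (-r) r, y < x → |f x - f y| ≤ C * |x - y| := by
      intro x hx y hy hyx
      obtain ⟨ξ, hξ, hs⟩ := exists_deriv_eq_slope f hyx (hcont.mono (Icc_subset_Icc hy.1 hx.2))
        (fun z hz => (hd1 z ⟨by linarith [hy.1, hz.1],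
          by linarith [hx.2, hz.2]⟩).differentiableAt.differentiableWithinAt)
      have hb := (h2 ξ ⟨by linarith [hy.1, hξ.1], by linarith [hx.2, hξ.2]⟩).2.1
      rw [hs, abs_div, div_lt_iff₀ (abs_pos.2 (by linarith))] at hb
      exact hb.le
    intro x hx y hy
    rcases lt_trichotomy x y with h | h | h
    · rw [abs_sub_comm, abs_sub_comm x]
      exact key y hy x hx h
    · simp [h]
    · exact key x hx y hy h
  have hupper : ∀ x ∈ Icc (-r) r, |f x - f x₀| ≤ C * |x - x₀| := fun x hx =>
    hlip x hx x₀ (hsubI hx₀)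
  have hmvt : ∀ x ∈ Icc (x₀ - r / 2) (x₀ + r / 2), ∀ y ∈ Icc (x₀ - r / 2) (x₀ + r / 2), x ≤ y →
      r ^ 2 * (y - x) ≤ f y - f x := by
    have hsubD : ∀ x ∈ Icc (x₀ - r / 2) (x₀ + r / 2), |x - x₀| ≤ r / 2 := fun x hx => by
      rw [abs_le]
      exact ⟨by linarith [hx.1], by linarith [hx.2]⟩
    refine Convex.mul_sub_le_image_sub_of_le_deriv (convex_Icc _ _) (fun z hz => ?_)
      (fun z hz => ?_) (fun z hz => ?_)
    · exact (hd1 z (hsub z (hsubD z hz))).continuousAt.continuousWithinAt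
    · exact (hd1 z (hsub z (hsubD z (interior_subset hz)))).differentiableAt.differentiableWithinAt
    · exact (hsteep z (hsubD z (interior_subset hz))).le
  have hpd : ∀ x ∈ Icc (-r) r, pDist (f x) = |f x - f x₀| := by
    intro x hx
    have hpi := Real.pi_gt_three
    have hxx : |x - x₀| ≤ 2 * r := by
      rw [abs_le]
      exact ⟨by linarith [hx.1, hx₀.2], by linarith [hx.2, hx₀.1]⟩
    have hb : |f x - f x₀| ≤ π / 2 := by
      have := hupper x hx
      nlinarith
    rw [← pDist_eq_abs hb]
    apply pDist_congr
    rw [AddCircle.coe_sub, h4, sub_zero]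
  have hm1 : min (1 / 2) c * r ^ 3 ≤ r ^ 2 * (r / 2) := by
    have : min (1 / 2) c ≤ 1 / 2 := min_le_left _ _
    have : min (1 / 2) c * r ^ 3 ≤ 1 / 2 * r ^ 3 := by gcongr
    linarith
  have hm2 : min (1 / 2) c * r ^ 3 ≤ c * r ^ 3 := by
    have : min (1 / 2) c ≤ c := min_le_right _ _
    gcongr
  have hne : ∀ x ∈ Icc (-r) r, f x - f x₀ = 0 → x = x₀ := by
    intro x hx hx0
    exact h5 x hx (by rw [sub_eq_zero.1 hx0, h4])
  refine ⟨hcont.sub continuousOn_const, fun x hx => (hd1 x hx).sub_const _, hd2,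
    fun x hx => (h2 x (hsubI hx)).2.1.le, fun x hx => ?_, fun x hx => (hsteep x hx).le, hupper,
    ?_, ?_, ?_, ?_⟩
  · have := (h2 x (hsubI hx)).2.2
    rw [iteratedDeriv_succ, iteratedDeriv_one] at this
    exact this.le
  · intro x hx hx'
    exact hmvt x₀ ⟨by linarith, by linarith⟩ x ⟨by linarith, hx'⟩ hx
  · intro x hx hx'
    have := hmvt x ⟨hx', by linarith⟩ x₀ ⟨by linarith, by linarith⟩ hx
    linarith
  · have hx1 : r ^ 2 * (r / 2) ≤ f (x₀ + r / 2) - f x₀ := by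
      have := hmvt x₀ ⟨by linarith, by linarith⟩ (x₀ + r / 2) ⟨by linarith, by linarith⟩
        (by linarith)
      linarith [this, show r ^ 2 * (x₀ + r / 2 - x₀) = r ^ 2 * (r / 2) by ring]
    have hgpos : ∀ x ∈ Icc (x₀ + r / 2) r, 0 < f x - f x₀ := by
      intro x hx
      by_contra! hle
      have hcx : ContinuousOn (fun z => f z - f x₀) (Icc (x₀ + r / 2) x) :=
        (hcont.sub continuousOn_const).mono (Icc_subset_Icc (by linarith [hx₀.1]) hx.2)
      obtain ⟨z, hz, hz0⟩ := intermediate_value_Icc' hx.1 hcx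
        (show (0 : ℝ) ∈ Icc _ _ from ⟨hle, le_trans (by positivity) hx1⟩)
      have := hne z ⟨by linarith [hz.1, hx₀.1], hz.2.trans hx.2⟩ hz0
      linarith [hz.1]
    intro x hx hx'
    refine le_of_le_of_deriv_neg (g := fun z => f z - f x₀) (a := x₀ + r / 2) (b := r)
      ((hcont.sub continuousOn_const).mono (Icc_subset_Icc_left (by linarith [hx₀.1])))
      (fun z hz => ?_) (hm1.trans hx1) (fun z hz hz' => ?_) x ⟨hx', hx.2⟩
    · exact ((hd1 z ⟨by linarith [hz.1, hx₀.1], hz.2⟩).sub_const _).differentiableAt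
    · have hzI : z ∈ Icc (-r) r := ⟨by linarith [hz.1, hx₀.1], hz.2.le⟩
      rw [deriv_sub_const] at hz'
      have := h8 z hzI (by nlinarith)
      rw [hpd z hzI, abs_of_pos (hgpos z ⟨hz.1.le, hz.2.le⟩)] at this
      linarith
  · have hx1 : r ^ 2 * (r / 2) ≤ f x₀ - f (x₀ - r / 2) := by
      have := hmvt (x₀ - r / 2) ⟨by linarith, by linarith⟩ x₀ ⟨by linarith, by linarith⟩
        (by linarith)
      linarith [this, show r ^ 2 * (x₀ - (x₀ - r / 2)) = r ^ 2 * (r / 2) by ring]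
    have hgneg : ∀ x ∈ Icc (-r) (x₀ - r / 2), f x - f x₀ < 0 := by
      intro x hx
      by_contra! hle
      have hcx : ContinuousOn (fun z => f z - f x₀) (Icc x (x₀ - r / 2)) :=
        (hcont.sub continuousOn_const).mono (Icc_subset_Icc hx.1 (by linarith [hx₀.2]))
      obtain ⟨z, hz, hz0⟩ := intermediate_value_Icc' hx.2 hcx
        (show (0 : ℝ) ∈ Icc _ _ from ⟨by
          have : 0 ≤ r ^ 2 * (r / 2) := by positivity
          linarith, hle⟩)
      have := hne z ⟨hx.1.trans hz.1, by linarith [hz.2, hx₀.2]⟩ hz0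
      linarith [hz.2]
    intro x hx hx'
    have hmaps : MapsTo (fun y : ℝ => -y) (Icc (-(x₀ - r / 2)) r) (Icc (-r) r) := fun y hy =>
      ⟨by linarith [hy.2], by linarith [hy.1, hx₀.2]⟩
    have hdr : ∀ z ∈ Ioo (-(x₀ - r / 2)) r,
        HasDerivAt (fun y => f x₀ - f (-y)) (deriv f (-z)) z := by
      intro z hz
      have h0 := hd1 (-z) ⟨by linarith [hz.2], by linarith [hz.1, hx₀.2]⟩
      have h1 := h0.comp z (hasDerivAt_neg z)
      have h2 := h1.const_sub (f x₀)
      simpa using h2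
    have := le_of_le_of_deriv_neg (g := fun y => f x₀ - f (-y)) (a := -(x₀ - r / 2)) (b := r)
      (continuousOn_const.sub (hcont.comp continuousOn_neg hmaps))
      (fun z hz => (hdr z hz).differentiableAt)
      (by simp only [neg_neg]; exact hm1.trans hx1) (fun z hz hz' => ?_) (-x)
      ⟨by linarith, by linarith [hx.1]⟩
    · simp only [neg_neg] at this
      linarith
    · have hzI := hmaps ⟨hz.1.le, hz.2.le⟩
      simp only at hzI
      rw [(hdr z hz).deriv] at hz'
      have := h8 (-z) hzI (by nlinarith)
      rw [hpd (-z) hzI, abs_of_neg (hgneg (-z) ⟨hzI.1, by linarith [hz.1]⟩)] at this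
      linarith

lemma Branch.tan {C m r x₀ : ℝ} {G G₁ G₂ : ℝ → ℝ} (h : Branch C m r x₀ G G₁ G₂) (hC : 0 < C)
    (hr : 0 < r) (hm : 0 < m) (hx₀ : |x₀| ≤ r / 3) (hsmall : ∀ x ∈ Icc (-r) r, |G x| ≤ 1 / 8) :
    Branch (2 * C + 4 * C ^ 2) m r x₀ (fun x => Real.tan (G x))
      (fun x => (1 + Real.tan (G x) ^ 2) * G₁ x)
      (fun x => 2 * Real.tan (G x) * ((1 + Real.tan (G x) ^ 2) * G₁ x) * G₁ x
        + (1 + Real.tan (G x) ^ 2) * G₂ x) := by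
  have hpi := Real.pi_gt_three
  have hhalf : ∀ x ∈ Icc (-r) r, |G x| ≤ 1 / 2 := fun x hx => (hsmall x hx).trans (by norm_num)
  have hsubI : Ioo (-r) r ⊆ Icc (-r) r := Ioo_subset_Icc_self
  have hT1 : ∀ x ∈ Icc (-r) r, |Real.tan (G x)| ≤ 1 := fun x hx => by
    have := abs_tan_le (hhalf x hx)
    linarith [hsmall x hx]
  have hsq := fun x hx => tan_sq_le (hhalf x hx)
  have hle : ∀ y, 0 ≤ y → |y| ≤ 1 / 8 → y ≤ Real.tan y := fun y hy hy' =>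
    Real.le_tan hy (by rw [abs_le] at hy'; linarith)
  have hge : ∀ y, y ≤ 0 → |y| ≤ 1 / 8 → Real.tan y ≤ y := fun y hy hy' => by
    have := hle (-y) (by linarith) (by rwa [abs_neg])
    rw [Real.tan_neg] at this
    linarith
  rw [abs_le] at hx₀
  have hd1 : ∀ x ∈ Ioo (-r) r,
      HasDerivAt (fun x => Real.tan (G x)) ((1 + Real.tan (G x) ^ 2) * G₁ x) x := fun x hx =>
    (hasDerivAt_tan_one_add_sq (hhalf x (hsubI hx))).comp x (h.hd1 x hx)
  refine ⟨fun x hx => ?_, hd1, fun x hx => ?_, fun x hx => ?_, fun x hx => ?_, fun x hx => ?_,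
    fun x hx => ?_, fun x hx hx' => ?_, fun x hx hx' => ?_, fun x hx hx' => ?_,
    fun x hx hx' => ?_⟩
  · exact (hasDerivAt_tan_one_add_sq (hhalf x hx)).continuousAt.comp_continuousWithinAt
      (h.cont x hx)
  · have : HasDerivAt (fun x => (1 + Real.tan (G x) ^ 2) * G₁ x) _ x :=
      (((hd1 x hx).pow 2).const_add 1).mul (h.hd2 x hx)
    refine this.congr_deriv ?_
    simp
  · have h1 := hsq x (hsubI hx)
    have h2 := h.bd1 x hx
    rw [abs_mul, abs_of_pos (by positivity)]
    nlinarith [abs_nonneg (G₁ x), sq_nonneg C]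
  · have h1 := hsq x (hsubI hx)
    have h2 := h.bd1 x hx
    have h3 := h.bd2 x hx
    have h4 := hT1 x (hsubI hx)
    have h5 : (0:ℝ) < 1 + Real.tan (G x) ^ 2 := by positivity
    refine (abs_add_le _ _).trans ?_
    rw [abs_mul, abs_mul, abs_mul, abs_mul, abs_mul, abs_of_pos h5,
      abs_of_pos (by norm_num : (0 : ℝ) < 2)]
    have e1 : (1 + Real.tan (G x) ^ 2) * |G₁ x| ≤ 2 * C := by gcongr; linarith
    have e2 : (1 + Real.tan (G x) ^ 2) * |G₂ x| ≤ 2 * C := by gcongr; linarith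
    have e3 : 2 * |Real.tan (G x)| * ((1 + Real.tan (G x) ^ 2) * |G₁ x|) * |G₁ x|
        ≤ 2 * 1 * (2 * C) * C := by gcongr
    linarith
  · have h1 := h.steep x hx
    nlinarith [sq_nonneg (Real.tan (G x)), sq_nonneg r]
  · have h1 := abs_tan_le (hhalf x hx)
    have h2 := h.upper x hx
    nlinarith [abs_nonneg (x - x₀), mul_nonneg (sq_nonneg C) (abs_nonneg (x - x₀))]
  · have h1 := h.near_right x hx hx'
    refine h1.trans (hle _ (le_trans ?_ h1) (hsmall x ⟨by linarith, by linarith⟩))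
    have : 0 ≤ x - x₀ := by linarith
    positivity
  · have h1 := h.near_left x hx hx'
    refine (hge _ (h1.trans ?_) (hsmall x ⟨by linarith, by linarith⟩)).trans h1
    have : 0 ≤ x₀ - x := by linarith
    have : 0 ≤ r ^ 2 * (x₀ - x) := by positivity
    linarith
  · have h1 := h.far_right x hx hx'
    exact h1.trans (hle _ (by linarith) (hsmall x hx))
  · have h1 := h.far_left x hx hx'
    exact (hge _ (by linarith) (hsmall x hx)).trans h1

/-- Two branches `T` (zero at `0`) and `E` (zero at `d`), together with a small positive function
`W`, with all the smallness conditions relating their scales. -/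
structure BranchPair (C M m r d a δ e : ℝ) (T T₁ T₂ E E₁ E₂ W W₁ W₂ : ℝ → ℝ) : Prop where
  hT : Branch M m r 0 T T₁ T₂
  hE : Branch C m r d E E₁ E₂
  hEs : ∀ x ∈ Icc (-r) r, |E x| ≤ 1 / 8
  Wcont : ContinuousOn W (Icc (-r) r)
  Wd1 : ∀ x ∈ Ioo (-r) r, HasDerivAt W (W₁ x) x
  Wd2 : ∀ x ∈ Ioo (-r) r, HasDerivAt W₁ (W₂ x) x
  Wpos : ∀ x ∈ Icc (-r) r, 0 < W x
  Wlt : ∀ x ∈ Icc (-r) r, W x < a ^ 2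
  W1le : ∀ x ∈ Ioo (-r) r, |W₁ x| ≤ 2 * a
  W2le : ∀ x ∈ Ioo (-r) r, |W₂ x| ≤ e
  hM : M = 2 * C + 4 * C ^ 2
  hC : 0 < C
  hm : 0 < m
  hr : 0 < r
  hr1 : r < 1
  hd0 : 0 ≤ d
  hdr : d ≤ r / 3
  ha : 0 < a
  hδr : δ ≤ r / 16
  slope : (3 + 2 * M * C) * a < r ^ 4 * (δ - a)
  conc : (2 * M * (3 * C + 1) + 2 * M ^ 2) * δ + e < 2 * r ^ 4
  test : (C + 1 / r ^ 2) * a ≤ r ^ 2 * δ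
  test' : (C + 1 / r ^ 2) * a < m

namespace BranchPair

variable {C M m r d a δ e : ℝ} {T T₁ T₂ E E₁ E₂ W W₁ W₂ : ℝ → ℝ}

lemma M_pos (h : BranchPair C M m r d a δ e T T₁ T₂ E E₁ E₂ W W₁ W₂) : 0 < M := by
  have := h.hC
  rw [h.hM]
  positivity

lemma two_mul_a_lt (h : BranchPair C M m r d a δ e T T₁ T₂ E E₁ E₂ W W₁ W₂) : 2 * a < δ := by
  have h1 := h.slope
  have hr4 : r ^ 4 ≤ 1 := pow_le_one₀ h.hr.le h.hr1.le
  have hr4' : 0 < r ^ 4 := pow_pos h.hr 4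
  have : 0 ≤ 2 * M * C * a := by
    have := h.M_pos
    have := h.hC
    have := h.ha
    positivity
  have ha := h.ha
  have h0 : 0 < δ - a := by
    by_contra! hle
    nlinarith
  nlinarith

lemma δ_pos (h : BranchPair C M m r d a δ e T T₁ T₂ E E₁ E₂ W W₁ W₂) : 0 < δ := by
  linarith [h.two_mul_a_lt, h.ha]

/-- The value of the test function at `d + a`. -/
lemma test_le_δ (h : BranchPair C M m r d a δ e T T₁ T₂ E E₁ E₂ W W₁ W₂) :
    (C + 1 / r ^ 2) * a ≤ δ := by
  have h1 := h.test
  have : r ^ 2 ≤ 1 := pow_le_one₀ h.hr.le h.hr1.le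
  nlinarith [h.δ_pos]

lemma abs_le_half (h : BranchPair C M m r d a δ e T T₁ T₂ E E₁ E₂ W W₁ W₂) {μ x : ℝ}
    (hμ : |μ| ≤ δ) (hx : x ∈ Icc (-r) r) : |μ - E x| ≤ 1 / 4 := by
  have h1 := abs_le.1 (h.hEs x hx)
  have h2 := abs_le.1 hμ
  have h3 := h.hδr
  have h4 := h.hr1
  rw [abs_le]
  constructor <;> linarith

lemma T_pos (h : BranchPair C M m r d a δ e T T₁ T₂ E E₁ E₂ W W₁ W₂) {x : ℝ}
    (hx : x ∈ Icc (-r) r) (hx0 : 0 < x) : 0 < T x := by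
  rcases le_total x (0 + r / 2) with h1 | h1
  · have := h.hT.near_right x hx0.le h1
    have : 0 < r ^ 2 * (x - 0) := by
      have := h.hr
      rw [sub_zero]
      positivity
    linarith
  · linarith [h.hT.far_right x hx h1, h.hm]

lemma T_neg (h : BranchPair C M m r d a δ e T T₁ T₂ E E₁ E₂ W W₁ W₂) {x : ℝ}
    (hx : x ∈ Icc (-r) r) (hx0 : x < 0) : T x < 0 := by
  rcases le_total (0 - r / 2) x with h1 | h1
  · have := h.hT.near_left x hx0.le h1
    have : 0 < r ^ 2 * (0 - x) := mul_pos (pow_pos h.hr 2) (by linarith)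
    linarith
  · linarith [h.hT.far_left x hx h1, h.hm]

lemma T_zero (h : BranchPair C M m r d a δ e T T₁ T₂ E E₁ E₂ W W₁ W₂) : T 0 = 0 := by
  have := h.hT.upper 0 ⟨by linarith [h.hr], h.hr.le⟩
  simpa using this

lemma E_zero (h : BranchPair C M m r d a δ e T T₁ T₂ E E₁ E₂ W W₁ W₂) : E d = 0 := by
  have := h.hE.upper d ⟨by linarith [h.hr, h.hd0], by linarith [h.hr, h.hdr]⟩
  simpa using this

lemma E_neg (h : BranchPair C M m r d a δ e T T₁ T₂ E E₁ E₂ W W₁ W₂) {x : ℝ}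
    (hx : x ∈ Icc (-r) r) (hxd : x < d) : E x < 0 := by
  rcases le_total (d - r / 2) x with h1 | h1
  · have := h.hE.near_left x hxd.le h1
    have : 0 < r ^ 2 * (d - x) := mul_pos (pow_pos h.hr 2) (by linarith)
    linarith
  · linarith [h.hE.far_left x hx h1, h.hm]

lemma E_nonneg (h : BranchPair C M m r d a δ e T T₁ T₂ E E₁ E₂ W W₁ W₂) {x : ℝ}
    (hx : x ∈ Icc (-r) r) (hxd : d ≤ x) : 0 ≤ E x := by
  rcases le_total x (d + r / 2) with h1 | h1
  · have := h.hE.near_right x hxd h1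
    have : 0 ≤ r ^ 2 * (x - d) := mul_nonneg (sq_nonneg r) (by linarith)
    linarith
  · linarith [h.hE.far_right x hx h1, h.hm]

lemma hasDerivAt_tan_sub (h : BranchPair C M m r d a δ e T T₁ T₂ E E₁ E₂ W W₁ W₂) {μ x : ℝ}
    (hμ : |μ| ≤ δ) (hx : x ∈ Ioo (-r) r) :
    HasDerivAt (fun x => Real.tan (μ - E x)) (-((1 + Real.tan (μ - E x) ^ 2) * E₁ x)) x := by
  have h1 := h.abs_le_half hμ (Ioo_subset_Icc_self hx)
  have h2 := hasDerivAt_tan_one_add_sq (h1.trans (by norm_num : (1:ℝ) / 4 ≤ 1 / 2))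
  have h3 := HasDerivAt.comp x (h₂ := Real.tan) (h := fun x => μ - E x) h2
    ((h.hE.hd1 x hx).const_sub μ)
  exact h3.congr_deriv (by ring)

lemma hasDerivAt_gap (h : BranchPair C M m r d a δ e T T₁ T₂ E E₁ E₂ W W₁ W₂) {μ x : ℝ}
    (hμ : |μ| ≤ δ) (hx : x ∈ Ioo (-r) r) :
    HasDerivAt (fun x => T x * Real.tan (μ - E x) - W x)
      (T₁ x * Real.tan (μ - E x) - T x * ((1 + Real.tan (μ - E x) ^ 2) * E₁ x) - W₁ x) x := by
  have : HasDerivAt (fun x => T x * Real.tan (μ - E x) - W x) _ x :=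
    ((h.hT.hd1 x hx).mul (h.hasDerivAt_tan_sub hμ hx)).sub (h.Wd1 x hx)
  exact this.congr_deriv (by ring)

lemma hasDerivAt_deriv_gap (h : BranchPair C M m r d a δ e T T₁ T₂ E E₁ E₂ W W₁ W₂) {μ x : ℝ}
    (hμ : |μ| ≤ δ) (hx : x ∈ Ioo (-r) r) :
    HasDerivAt
      (fun x => T₁ x * Real.tan (μ - E x) - T x * ((1 + Real.tan (μ - E x) ^ 2) * E₁ x) - W₁ x)
      (T₂ x * Real.tan (μ - E x) - 2 * (T₁ x * ((1 + Real.tan (μ - E x) ^ 2) * E₁ x))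
        - T x * ((1 + Real.tan (μ - E x) ^ 2) * E₂ x
          - 2 * Real.tan (μ - E x) * ((1 + Real.tan (μ - E x) ^ 2) * E₁ x) * E₁ x) - W₂ x) x := by
  have hS := h.hasDerivAt_tan_sub hμ hx
  have : HasDerivAt
      (fun x => T₁ x * Real.tan (μ - E x) - T x * ((1 + Real.tan (μ - E x) ^ 2) * E₁ x) - W₁ x)
      _ x :=
    (((h.hT.hd2 x hx).mul hS).sub
      ((h.hT.hd1 x hx).mul (((hS.pow 2).const_add 1).mul (h.hE.hd2 x hx)))).sub (h.Wd2 x hx)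
  refine this.congr_deriv ?_
  simp
  ring

lemma continuousOn_tan_sub (h : BranchPair C M m r d a δ e T T₁ T₂ E E₁ E₂ W W₁ W₂) {μ : ℝ}
    (hμ : |μ| ≤ δ) : ContinuousOn (fun x => Real.tan (μ - E x)) (Icc (-r) r) := fun x hx => by
  have h1 : ContinuousWithinAt (fun x => μ - E x) (Icc (-r) r) x :=
    continuousWithinAt_const.sub (h.hE.cont x hx)
  exact ContinuousAt.comp_continuousWithinAt (f := fun x => μ - E x)
    (hasDerivAt_tan_one_add_sq ((h.abs_le_half hμ hx).trans (by norm_num))).continuousAt h1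

lemma continuousOn_gap (h : BranchPair C M m r d a δ e T T₁ T₂ E E₁ E₂ W W₁ W₂) {μ : ℝ}
    (hμ : |μ| ≤ δ) : ContinuousOn (fun x => T x * Real.tan (μ - E x) - W x) (Icc (-r) r) :=
  (h.hT.cont.mul (h.continuousOn_tan_sub hμ)).sub h.Wcont

lemma strictConcaveOn_gap (h : BranchPair C M m r d a δ e T T₁ T₂ E E₁ E₂ W W₁ W₂) {μ : ℝ}
    (hμ : |μ| ≤ δ) (hd : d < δ) :
    StrictConcaveOn ℝ (Icc (-(2 * δ)) (2 * δ)) (fun x => T x * Real.tan (μ - E x) - W x) := by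
  have hδ := h.δ_pos
  have hδr := h.hδr
  have hr := h.hr
  have hC := h.hC
  have hM := h.M_pos
  have hd0 := h.hd0
  have hsub : Icc (-(2 * δ)) (2 * δ) ⊆ Ioo (-r) r := fun x hx =>
    ⟨by linarith [hx.1], by linarith [hx.2]⟩
  refine strictConcaveOn_of_deriv2_neg (convex_Icc _ _)
    ((h.continuousOn_gap hμ).mono (hsub.trans Ioo_subset_Icc_self)) fun x hx => ?_
  rw [interior_Icc] at hx
  have hxI := hsub (Ioo_subset_Icc_self hx)
  have hev : deriv (fun x => T x * Real.tan (μ - E x) - W x) =ᶠ[nhds x]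
      fun x => T₁ x * Real.tan (μ - E x) - T x * ((1 + Real.tan (μ - E x) ^ 2) * E₁ x) - W₁ x := by
    filter_upwards [Ioo_mem_nhds hxI.1 hxI.2] with y hy
    exact (h.hasDerivAt_gap hμ hy).deriv
  rw [Function.iterate_succ_apply, Function.iterate_one, hev.deriv_eq,
    (h.hasDerivAt_deriv_gap hμ hxI).deriv]
  have hμE := h.abs_le_half hμ (Ioo_subset_Icc_self hxI)
  have hhalf : |μ - E x| ≤ 1 / 2 := hμE.trans (by norm_num)
  have hS2 := tan_sq_le hhalf
  have hS := abs_tan_le hhalf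
  have hTx := h.hT.upper x (Ioo_subset_Icc_self hxI)
  have hEx := h.hE.upper x (Ioo_subset_Icc_self hxI)
  have hxabs : |x - 0| ≤ 2 * δ := by
    rw [sub_zero, abs_le]
    exact ⟨hx.1.le, hx.2.le⟩
  have hxd : |x - d| ≤ 3 * δ := by
    rw [abs_le]
    exact ⟨by linarith [hx.1], by linarith [hx.2]⟩
  have hT₁ := h.hT.steep x (by linarith)
  have hE₁ := h.hE.steep x (by linarith)
  have hT₂ := h.hT.bd2 x hxI
  have hE₂ := h.hE.bd2 x hxI
  have hE₁' := h.hE.bd1 x hxI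
  have hW₂ := h.W2le x hxI
  set S := Real.tan (μ - E x)
  have hS' : |S| ≤ 2 * (3 * C + 1) * δ := by
    have : |μ - E x| ≤ |μ| + |E x| := abs_sub _ _
    have : |E x| ≤ C * (3 * δ) := hEx.trans (by gcongr)
    linarith
  have hS1 : |S| ≤ 1 := by linarith
  have hT' : |T x| ≤ M * (2 * δ) := hTx.trans (by gcongr)
  have t1 : |T₂ x * S| ≤ M * (2 * (3 * C + 1) * δ) := by
    rw [abs_mul]
    gcongr
  have t2 : r ^ 2 * r ^ 2 ≤ T₁ x * ((1 + S ^ 2) * E₁ x) := by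
    have : r ^ 2 ≤ (1 + S ^ 2) * E₁ x := by nlinarith [sq_nonneg S, sq_nonneg r]
    have : 0 < r ^ 2 := by positivity
    gcongr
    linarith
  have t3 : |(1 + S ^ 2) * E₂ x - 2 * S * ((1 + S ^ 2) * E₁ x) * E₁ x| ≤ M := by
    have h5 : (0:ℝ) < 1 + S ^ 2 := by positivity
    refine (abs_sub _ _).trans ?_
    rw [abs_mul, abs_mul, abs_mul, abs_mul, abs_mul, abs_of_pos h5,
      abs_of_pos (by norm_num : (0:ℝ) < 2)]
    have e1 : (1 + S ^ 2) * |E₁ x| ≤ 2 * C := by gcongr; linarith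
    have e2 : (1 + S ^ 2) * |E₂ x| ≤ 2 * C := by gcongr; linarith
    have e3 : 2 * |S| * ((1 + S ^ 2) * |E₁ x|) * |E₁ x| ≤ 2 * 1 * (2 * C) * C := by gcongr
    rw [h.hM]
    linarith
  have t4 : |T x * ((1 + S ^ 2) * E₂ x - 2 * S * ((1 + S ^ 2) * E₁ x) * E₁ x)|
      ≤ M * (2 * δ) * M := by
    rw [abs_mul]
    gcongr
  have hconc := h.conc
  have t1' := (abs_le.1 t1).2
  have t4' := (abs_le.1 t4).1
  have t5' := (abs_le.1 hW₂).1
  nlinarith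

/-- If the zeros of the two branches are far apart, then the gap function is positive away from
them. -/
lemma gap_pos_of_mem (h : BranchPair C M m r d a δ e T T₁ T₂ E E₁ E₂ W W₁ W₂)
    (hd : δ ≤ d) {x : ℝ} (hx : x ∈ Icc a (d - a)) : 0 < T x * Real.tan (0 - E x) - W x := by
  have hr := h.hr
  have ha := h.ha
  have hd0 := h.hd0
  have hdr := h.hdr
  have hxI : x ∈ Icc (-r) r := ⟨by linarith [hx.1], by linarith [hx.2]⟩
  have hT := h.hT.near_right x (by linarith [hx.1]) (by linarith [hx.2])
  have hE := h.hE.near_left x (by linarith [hx.2]) (by linarith [hx.1])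
  have hW := h.Wlt x hxI
  have h0 : 0 ≤ r ^ 2 * (d - x) := mul_nonneg (sq_nonneg r) (by linarith [hx.2])
  have hS : r ^ 2 * (d - x) ≤ Real.tan (0 - E x) := by
    have := Real.le_tan (x := 0 - E x) (by linarith)
      (by linarith [Real.pi_gt_three, (abs_le.1 (h.hEs x hxI)).1])
    linarith
  have hx0 : 0 ≤ r ^ 2 * (x - 0) := mul_nonneg (sq_nonneg r) (by linarith [hx.1])
  have hprod : r ^ 2 * (x - 0) * (r ^ 2 * (d - x)) ≤ T x * Real.tan (0 - E x) := by gcongr; linarith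
  have hslope := h.slope
  have hMC : 0 ≤ 2 * M * C := by
    have := h.M_pos
    have := h.hC
    positivity
  have hr4 : 0 < r ^ 4 := by positivity
  have h1 : a * (δ - a) ≤ x * (d - x) := by nlinarith [hx.1, hx.2]
  have h2 : a < r ^ 4 * (δ - a) := by nlinarith
  have h3 : a * a < r ^ 4 * (x * (d - x)) := by nlinarith
  nlinarith

lemma strictMonoOn_gap (h : BranchPair C M m r d a δ e T T₁ T₂ E E₁ E₂ W W₁ W₂)
    (hd : δ ≤ d) : StrictMonoOn (fun x => T x * Real.tan (0 - E x) - W x) (Icc 0 a) := by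
  have hr := h.hr
  have ha := h.ha
  have hdr := h.hdr
  have haδ := h.two_mul_a_lt
  have hδr := h.hδr
  have hC := h.hC
  have hM := h.M_pos
  have h00 : |(0:ℝ)| ≤ δ := by simp [h.δ_pos.le]
  refine strictMonoOn_of_deriv_pos (convex_Icc _ _)
    ((h.continuousOn_gap h00).mono (Icc_subset_Icc (by linarith) (by linarith))) fun x hx => ?_
  rw [interior_Icc] at hx
  have hxI : x ∈ Ioo (-r) r := ⟨by linarith [hx.1], by linarith [hx.2]⟩
  rw [(h.hasDerivAt_gap h00 hxI).deriv]
  have hhalf := (h.abs_le_half h00 (Ioo_subset_Icc_self hxI)).trans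
      (by norm_num : (1 : ℝ) / 4 ≤ 1 / 2)
  have hS2 := tan_sq_le hhalf
  have hE := h.hE.near_left x (by linarith [hx.2]) (by linarith [hx.1])
  have hxd : 0 ≤ r ^ 2 * (d - x) := mul_nonneg (sq_nonneg r) (by linarith [hx.2])
  have hS : r ^ 2 * (d - x) ≤ Real.tan (0 - E x) := by
    have := Real.le_tan (x := 0 - E x) (by linarith)
      (by linarith [Real.pi_gt_three, (abs_le.1 (h.hEs x (Ioo_subset_Icc_self hxI))).1])
    linarith
  have hT := (abs_le.1 (h.hT.upper x (Ioo_subset_Icc_self hxI))).2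
  rw [sub_zero, abs_of_pos hx.1] at hT
  have hTp := h.T_pos (Ioo_subset_Icc_self hxI) hx.1
  have hT₁ := h.hT.steep x (by rw [sub_zero, abs_of_pos hx.1]; linarith [hx.2])
  have hE₁ := (abs_le.1 (h.hE.bd1 x hxI)).2
  have hE₁' := h.hE.steep x (by rw [abs_le]; constructor <;> linarith [hx.1, hx.2])
  have hW := (abs_le.1 (h.W1le x hxI)).2
  set S := Real.tan (0 - E x)
  have e1 : r ^ 2 * (r ^ 2 * (d - x)) ≤ T₁ x * S := by
    have : 0 < T₁ x := lt_of_lt_of_le (by positivity) hT₁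
    gcongr
  have e2 : T x * ((1 + S ^ 2) * E₁ x) ≤ (M * a) * (2 * C) := by
    have : 0 ≤ E₁ x := (sq_nonneg r).trans hE₁'
    have : T x ≤ M * a := hT.trans (by gcongr; exact hx.2.le)
    have : (1 + S ^ 2) * E₁ x ≤ 2 * C := by gcongr; linarith
    gcongr
  have e3 : r ^ 4 * (δ - a) ≤ r ^ 4 * (d - x) := by
    gcongr
    exact hx.2.le
  have hslope := h.slope
  nlinarith

lemma strictAntiOn_gap (h : BranchPair C M m r d a δ e T T₁ T₂ E E₁ E₂ W W₁ W₂)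
    (hd : δ ≤ d) : StrictAntiOn (fun x => T x * Real.tan (0 - E x) - W x) (Icc (d - a) d) := by
  have hr := h.hr
  have ha := h.ha
  have hdr := h.hdr
  have haδ := h.two_mul_a_lt
  have hδr := h.hδr
  have hC := h.hC
  have hM := h.M_pos
  have h00 : |(0:ℝ)| ≤ δ := by simp [h.δ_pos.le]
  refine strictAntiOn_of_deriv_neg (convex_Icc _ _)
    ((h.continuousOn_gap h00).mono (Icc_subset_Icc (by linarith) (by linarith))) fun x hx => ?_
  rw [interior_Icc] at hx
  have hxI : x ∈ Ioo (-r) r := ⟨by linarith [hx.1], by linarith [hx.2]⟩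
  have hx0 : 0 < x := by linarith [hx.1]
  rw [(h.hasDerivAt_gap h00 hxI).deriv]
  have hhalf := (h.abs_le_half h00 (Ioo_subset_Icc_self hxI)).trans
      (by norm_num : (1 : ℝ) / 4 ≤ 1 / 2)
  have hS := (abs_le.1 (abs_tan_le hhalf)).2
  have hEu := h.hE.upper x (Ioo_subset_Icc_self hxI)
  rw [abs_sub_comm x d, abs_of_pos (by linarith [hx.2] : 0 < d - x)] at hEu
  have hEn := h.E_neg (Ioo_subset_Icc_self hxI) hx.2
  have hT := h.hT.near_right x hx0.le (by linarith [hx.2])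
  have hT₁ := (abs_le.1 (h.hT.bd1 x hxI)).2
  have hT₁' := h.hT.steep x (by rw [sub_zero, abs_of_pos hx0]; linarith [hx.2])
  have hE₁' := h.hE.steep x (by rw [abs_le]; constructor <;> linarith [hx.1, hx.2])
  have hW := (abs_le.1 (h.W1le x hxI)).1
  have hS' : Real.tan (0 - E x) ≤ 2 * (C * a) := by
    rw [zero_sub, abs_neg] at hS
    have : C * (d - x) ≤ C * a := by gcongr; linarith [hx.1]
    rw [zero_sub]
    linarith
  have hS0 : 0 ≤ Real.tan (0 - E x) :=
    le_trans (by linarith) (Real.le_tan (x := 0 - E x) (by linarith)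
      (by linarith [Real.pi_gt_three, (abs_le.1 (h.hEs x (Ioo_subset_Icc_self hxI))).1]))
  set S := Real.tan (0 - E x)
  have e1 : T₁ x * S ≤ M * (2 * (C * a)) := by gcongr
  have e2 : (r ^ 2 * (x - 0)) * r ^ 2 ≤ T x * ((1 + S ^ 2) * E₁ x) := by
    have h1 : r ^ 2 ≤ (1 + S ^ 2) * E₁ x := by nlinarith [sq_nonneg S, sq_nonneg r]
    have h2 : 0 ≤ r ^ 2 * (x - 0) := mul_nonneg (sq_nonneg r) (by linarith)
    gcongr
    linarith
  have e3 : r ^ 4 * (δ - a) ≤ r ^ 4 * x := by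
    gcongr
    linarith [hx.1]
  have hslope := h.slope
  nlinarith

lemma arctan_tan_sub (h : BranchPair C M m r d a δ e T T₁ T₂ E E₁ E₂ W W₁ W₂) {μ x : ℝ}
    (hμ : |μ| ≤ δ) (hx : x ∈ Icc (-r) r) : Real.arctan (Real.tan (μ - E x)) = μ - E x := by
  have h1 := abs_le.1 (h.abs_le_half hμ hx)
  have := Real.pi_gt_three
  exact Real.arctan_tan (by linarith) (by linarith)

lemma add_arctan_eq_iff (h : BranchPair C M m r d a δ e T T₁ T₂ E E₁ E₂ W W₁ W₂) {μ x : ℝ}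
    (hμ : |μ| ≤ δ) (hx : x ∈ Icc (-r) r) (hx0 : x ≠ 0) :
    E x + Real.arctan (W x / T x) = μ ↔ T x * Real.tan (μ - E x) - W x = 0 := by
  have hT : T x ≠ 0 := by
    rcases lt_or_gt_of_ne hx0 with h1 | h1
    · exact (h.T_neg hx h1).ne
    · exact (h.T_pos hx h1).ne'
  have h1 : E x + Real.arctan (W x / T x) = μ ↔ Real.arctan (W x / T x) = μ - E x :=
    ⟨fun h => by linarith, fun h => by linarith⟩
  rw [h1, ← h.arctan_tan_sub hμ hx, Real.arctan_injective.eq_iff, h.arctan_tan_sub hμ hx,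
    div_eq_iff hT, sub_eq_zero, mul_comm (T x)]
  exact eq_comm

lemma add_arctan_lt (h : BranchPair C M m r d a δ e T T₁ T₂ E E₁ E₂ W W₁ W₂) {μ x : ℝ}
    (hμ : |μ| ≤ δ) (hx : x ∈ Icc (-r) r) (hx0 : 0 < x)
    (hgap : 0 < T x * Real.tan (μ - E x) - W x) : E x + Real.arctan (W x / T x) < μ := by
  have hT := h.T_pos hx hx0
  have : W x / T x < Real.tan (μ - E x) := by
    rw [div_lt_iff₀ hT]
    linarith
  have := Real.arctan_strictMono this
  rw [h.arctan_tan_sub hμ hx] at this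
  linarith

lemma lt_add_arctan (h : BranchPair C M m r d a δ e T T₁ T₂ E E₁ E₂ W W₁ W₂) {μ x : ℝ}
    (hμ : |μ| ≤ δ) (hx : x ∈ Icc (-r) r) (hx0 : 0 < x)
    (hgap : T x * Real.tan (μ - E x) - W x < 0) : μ < E x + Real.arctan (W x / T x) := by
  have hT := h.T_pos hx hx0
  have : Real.tan (μ - E x) < W x / T x := by
    rw [lt_div_iff₀ hT]
    linarith
  have := Real.arctan_strictMono this
  rw [h.arctan_tan_sub hμ hx] at this
  linarith

lemma lt_add_arctan_of_neg (h : BranchPair C M m r d a δ e T T₁ T₂ E E₁ E₂ W W₁ W₂) {μ x : ℝ}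
    (hμ : |μ| ≤ δ) (hx : x ∈ Icc (-r) r) (hx0 : x < 0)
    (hgap : 0 < T x * Real.tan (μ - E x) - W x) : μ < E x + Real.arctan (W x / T x) := by
  have hT := h.T_neg hx hx0
  have : Real.tan (μ - E x) < W x / T x := by
    rw [lt_div_iff_of_neg hT]
    linarith
  have := Real.arctan_strictMono this
  rw [h.arctan_tan_sub hμ hx] at this
  linarith

/-- The zeros of the gap function lie strictly between the zeros of the two branches. -/
lemma mem_Ioo_of_gap_eq_zero (h : BranchPair C M m r d a δ e T T₁ T₂ E E₁ E₂ W W₁ W₂) {x : ℝ}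
    (hx : x ∈ Icc (-r) r) (hgap : T x * Real.tan (0 - E x) - W x = 0) : x ∈ Ioo 0 d := by
  have hW := h.Wpos x hx
  have hd0 := h.hd0
  have hpi := Real.pi_gt_three
  have hE := abs_le.1 (h.hEs x hx)
  rcases lt_trichotomy x 0 with h1 | h1 | h1
  · exfalso
    have hT := h.T_neg hx h1
    have hEx := h.E_neg hx (by linarith)
    have : 0 < Real.tan (0 - E x) :=
      Real.tan_pos_of_pos_of_lt_pi_div_two (by linarith) (by linarith)
    nlinarith
  · exfalso
    rw [h1] at hgap hW
    rw [h.T_zero] at hgap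
    linarith
  · refine ⟨h1, ?_⟩
    by_contra! hdx
    have hT := h.T_pos hx h1
    have hEx := h.E_nonneg hx hdx
    have : 0 ≤ Real.tan (E x) := Real.tan_nonneg_of_nonneg_of_le_pi_div_two hEx (by linarith)
    rw [zero_sub, Real.tan_neg] at hgap
    nlinarith

lemma gap_zero_neg (h : BranchPair C M m r d a δ e T T₁ T₂ E E₁ E₂ W W₁ W₂) (μ : ℝ) :
    T 0 * Real.tan (μ - E 0) - W 0 < 0 := by
  have := h.Wpos 0 ⟨by linarith [h.hr], h.hr.le⟩
  rw [h.T_zero]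
  linarith

lemma gap_d_neg (h : BranchPair C M m r d a δ e T T₁ T₂ E E₁ E₂ W W₁ W₂) :
    T d * Real.tan (0 - E d) - W d < 0 := by
  have := h.Wpos d ⟨by linarith [h.hr, h.hd0], by linarith [h.hr, h.hdr]⟩
  rw [h.E_zero, sub_zero, Real.tan_zero]
  linarith

/-- If the zeros of the branches are far apart, the gap function has exactly two zeros. -/
lemma exists_zeros_of_le (h : BranchPair C M m r d a δ e T T₁ T₂ E E₁ E₂ W W₁ W₂)
    (hd : δ ≤ d) : ∃ x₁ ∈ Ioo 0 a, ∃ x₂ ∈ Ioo (d - a) d, ∀ x ∈ Icc (-r) r,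
      T x * Real.tan (0 - E x) - W x = 0 ↔ x = x₁ ∨ x = x₂ := by
  have ha := h.ha
  have hr := h.hr
  have hdr := h.hdr
  have haδ := h.two_mul_a_lt
  have hcont := h.continuousOn_gap (μ := 0) (by simp [h.δ_pos.le])
  have hmono := h.strictMonoOn_gap hd
  have hanti := h.strictAntiOn_gap hd
  have hpos : ∀ x ∈ Icc a (d - a), _ := fun x hx => h.gap_pos_of_mem hd hx
  obtain ⟨x₁, hx₁, hz₁⟩ := intermediate_value_Icc ha.le
    (hcont.mono (Icc_subset_Icc (by linarith) (by linarith)))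
    ⟨(h.gap_zero_neg 0).le, (hpos a ⟨le_rfl, by linarith⟩).le⟩
  obtain ⟨x₂, hx₂, hz₂⟩ := intermediate_value_Icc' (by linarith : d - a ≤ d)
    (hcont.mono (Icc_subset_Icc (by linarith) (by linarith)))
    ⟨h.gap_d_neg.le, (hpos (d - a) ⟨by linarith, le_rfl⟩).le⟩
  simp only at hz₁ hz₂
  have hx₁I := h.mem_Ioo_of_gap_eq_zero ⟨by linarith [hx₁.1], by linarith [hx₁.2]⟩ hz₁
  have hx₂I := h.mem_Ioo_of_gap_eq_zero ⟨by linarith [hx₂.1], by linarith [hx₂.2]⟩ hz₂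
  have hx₁a : x₁ < a := by
    by_contra! hle
    have := hpos x₁ ⟨hle, by linarith [hx₁.2]⟩
    linarith
  have hx₂a : d - a < x₂ := by
    by_contra! hle
    have := hpos x₂ ⟨by linarith [hx₂.1], hle⟩
    linarith
  refine ⟨x₁, ⟨hx₁I.1, hx₁a⟩, x₂, ⟨hx₂a, hx₂I.2⟩, fun x hx => ⟨fun hz => ?_, ?_⟩⟩
  · have hxI := h.mem_Ioo_of_gap_eq_zero hx hz
    by_cases h1 : x ≤ a
    · exact Or.inl (hmono.injOn ⟨hxI.1.le, h1⟩ hx₁ (hz.trans hz₁.symm))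
    · by_cases h2 : d - a ≤ x
      · exact Or.inr (hanti.injOn ⟨h2, hxI.2.le⟩ hx₂ (hz.trans hz₂.symm))
      · have := hpos x ⟨by linarith, by linarith⟩
        linarith
  · rintro (rfl | rfl)
    · exact hz₁
    · exact hz₂

end BranchPair

lemma StrictConcaveOn.midpoint_pos {g : ℝ → ℝ} {s : Set ℝ} (hg : StrictConcaveOn ℝ s g) {x y : ℝ}
    (hx : x ∈ s) (hy : y ∈ s) (hxy : x ≠ y) (hgx : g x = 0) (hgy : g y = 0) :
    0 < g ((x + y) / 2) := by
  have := hg.2 hx hy hxy (by norm_num : (0:ℝ) < 1 / 2) (by norm_num : (0:ℝ) < 1 / 2) (by norm_num)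
  rw [hgx, hgy] at this
  simp only [smul_eq_mul, mul_zero, add_zero] at this
  have e : (x + y) / 2 = 1 / 2 * x + 1 / 2 * y := by ring
  rw [e]
  exact this

lemma StrictConcaveOn.false_of_three_zeros {g : ℝ → ℝ} {s : Set ℝ} (hg : StrictConcaveOn ℝ s g)
    {x y z : ℝ} (hx : x ∈ s) (hz : z ∈ s) (hxy : x < y) (hyz : y < z)
    (hgx : g x = 0) (hgy : g y = 0) (hgz : g z = 0) : False := by
  have := hg.lt_on_openSegment hx hz (hxy.trans hyz).ne
    (by rw [openSegment_eq_Ioo (hxy.trans hyz)]; exact ⟨hxy, hyz⟩)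
  simp [hgx, hgy, hgz] at this

/-- A nonempty subset of a linear order with at most two elements. -/
lemma exists_eq_pair_of_no_three {X : Set ℝ} (hne : X.Nonempty)
    (h3 : ∀ x ∈ X, ∀ y ∈ X, ∀ z ∈ X, x < y → y < z → False) :
    ∃ x₁ ∈ X, ∃ x₂ ∈ X, x₁ ≤ x₂ ∧ ∀ x ∈ X, x = x₁ ∨ x = x₂ := by
  obtain ⟨p, hp⟩ := hne
  by_cases hall : ∀ q ∈ X, q = p
  · exact ⟨p, hp, p, hp, le_rfl, fun x hx => Or.inl (hall x hx)⟩
  push Not at hall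
  obtain ⟨q, hq, hqp⟩ := hall
  have key : ∀ u ∈ X, ∀ v ∈ X, u < v → ∀ x ∈ X, x = u ∨ x = v := by
    intro u hu v hv huv x hx
    by_contra! hcon
    rcases lt_or_gt_of_ne hcon.1 with h1 | h1
    · exact h3 x hx u hu v hv h1 huv
    · rcases lt_or_gt_of_ne hcon.2 with h2 | h2
      · exact h3 u hu x hx v hv h1 h2
      · exact h3 u hu v hv x hx huv h2
  rcases lt_or_gt_of_ne hqp with h1 | h1
  · exact ⟨q, hq, p, hp, h1.le, key q hq p hp h1⟩
  · exact ⟨p, hp, q, hq, h1.le, key p hp q hq h1⟩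

lemma pDist_eq_zero_iff {a : ℝ} : pDist a = 0 ↔ (a : AddCircle π) = 0 := norm_eq_zero

lemma BranchPair.exists_minimizers {C M m r d a δ e : ℝ} {T T₁ T₂ E E₁ E₂ W W₁ W₂ f : ℝ → ℝ}
    (h : BranchPair C M m r d a δ e T T₁ T₂ E E₁ E₂ W W₁ W₂)
    (hfc : ContinuousOn (fun x => pDist (f x)) (Icc (-r) r))
    (hf : ∀ x ∈ Icc (-r) r, x ≠ 0 →
      (f x : AddCircle π) = ((-(E x + Real.arctan (W x / T x)) : ℝ) : AddCircle π))
    (hf0 : (f 0 : AddCircle π) = ((-(π / 2 + E 0) : ℝ) : AddCircle π)) :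
    ∃ x₁ x₂ : ℝ, x₁ ≤ x₂ ∧
      x₁ ∈ Icc (-r) r ∧ x₂ ∈ Icc (-r) r ∧
      (∀ y ∈ Icc (-r) r, pDist (f x₁) ≤ pDist (f y)) ∧
      (∀ y ∈ Icc (-r) r, pDist (f x₂) ≤ pDist (f y)) ∧
      (∀ x ∈ Icc (-r) r,
        (∀ y ∈ Icc (-r) r, pDist (f x) ≤ pDist (f y)) → x = x₁ ∨ x = x₂) ∧
      |x₁| < 3 * δ ∧ |x₂ - d| < 3 * δ ∧
      (((f x₁ : AddCircle π) = 0 ∧ (f x₂ : AddCircle π) = 0) → 0 < x₁ ∧ x₂ < d) ∧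
      (((f x₁ : AddCircle π) = (f x₂ : AddCircle π) ∧ (f x₁ : AddCircle π) ≠ 0) →
        x₁ = x₂) := by
  have hpi := Real.pi_gt_three
  have hr := h.hr
  have hr1 := h.hr1
  have hδ := h.δ_pos
  have hδr := h.hδr
  have hd0 := h.hd0
  have hdr := h.hdr
  have ha := h.ha
  have haδ := h.two_mul_a_lt
  have h00 : |(0:ℝ)| ≤ δ := by simp [hδ.le]
  have h0I : (0:ℝ) ∈ Icc (-r) r := ⟨by linarith, hr.le⟩
  have hpf : ∀ x ∈ Icc (-r) r, x ≠ 0 → pDist (f x) = pDist (E x + Real.arctan (W x / T x)) :=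
    fun x hx hx0 => by rw [pDist_congr (hf x hx hx0), pDist_neg]
  have hle : ∀ x ∈ Icc (-r) r, x ≠ 0 → pDist (f x) ≤ |E x + Real.arctan (W x / T x)| :=
    fun x hx hx0 => (hpf x hx hx0).trans_le (pDist_le_abs _)
  have hpf0 : 1 / 4 < pDist (f 0) := by
    have hE0 : E 0 ≤ 0 := by
      rcases hd0.eq_or_lt with h1 | h1
      · have := h.E_zero
        rw [← h1] at this
        exact this.le
      · exact (h.E_neg h0I h1).le
    have hE1 := abs_le.1 (h.hEs 0 h0I)
    have hb : |π / 2 + E 0| = π / 2 + E 0 := abs_of_pos (by linarith)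
    rw [pDist_congr hf0, pDist_neg, pDist_eq_abs (by rw [hb]; linarith), hb]
    linarith
  have habs : ∀ x ∈ Icc (-r) r, x ≠ 0 → pDist (f x) ≤ 1 / 4 →
      |E x + Real.arctan (W x / T x)| = pDist (f x) := by
    intro x hx hx0 hb
    rw [hpf x hx hx0] at hb ⊢
    exact abs_eq_pDist (h.hEs x hx) (abs_le.2 ⟨(Real.neg_pi_div_two_lt_arctan _).le,
      (Real.arctan_lt_pi_div_two _).le⟩) hb
  have hzero : ∀ x ∈ Icc (-r) r,
      ((f x : AddCircle π) = 0 ↔ T x * Real.tan (0 - E x) - W x = 0) := by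
    intro x hx
    constructor
    · intro hz
      rw [← pDist_eq_zero_iff] at hz
      have hx0 : x ≠ 0 := by
        rintro rfl
        linarith
      rw [← h.add_arctan_eq_iff h00 hx hx0, ← abs_eq_zero, habs x hx hx0 (by linarith), hz]
    · intro hz
      have hx0 : x ≠ 0 := (h.mem_Ioo_of_gap_eq_zero hx hz).1.ne'
      rw [hf x hx hx0, (h.add_arctan_eq_iff h00 hx hx0).2 hz, neg_zero, AddCircle.coe_zero]
  by_cases hex : ∃ z ∈ Icc (-r) r, T z * Real.tan (0 - E z) - W z = 0
  · obtain ⟨x₁, hx₁, hz₁, x₂, hx₂, hz₂, h12, hall, hb₁, hb₂⟩ : ∃ x₁ ∈ Icc (-r) r,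
        T x₁ * Real.tan (0 - E x₁) - W x₁ = 0 ∧ ∃ x₂ ∈ Icc (-r) r,
        T x₂ * Real.tan (0 - E x₂) - W x₂ = 0 ∧ x₁ ≤ x₂ ∧
        (∀ x ∈ Icc (-r) r, T x * Real.tan (0 - E x) - W x = 0 → x = x₁ ∨ x = x₂) ∧
        |x₁| < 3 * δ ∧ |x₂ - d| < 3 * δ := by
      rcases lt_or_ge d δ with hdδ | hdδ
      · have hconc := h.strictConcaveOn_gap h00 hdδ
        have hloc : ∀ x ∈ Icc (-r) r, T x * Real.tan (0 - E x) - W x = 0 →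
            x ∈ Icc (-(2 * δ)) (2 * δ) := fun x hx hz => by
          have := h.mem_Ioo_of_gap_eq_zero hx hz
          exact ⟨by linarith [this.1], by linarith [this.2]⟩
        obtain ⟨x₁, hx₁, x₂, hx₂, h12, hall⟩ := exists_eq_pair_of_no_three
          (X := {x | x ∈ Icc (-r) r ∧ T x * Real.tan (0 - E x) - W x = 0}) hex
          fun x hx y hy z hz hxy hyz => hconc.false_of_three_zeros (hloc x hx.1 hx.2)
            (hloc z hz.1 hz.2) hxy hyz hx.2 hy.2 hz.2
        have h1 := h.mem_Ioo_of_gap_eq_zero hx₁.1 hx₁.2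
        have h2 := h.mem_Ioo_of_gap_eq_zero hx₂.1 hx₂.2
        refine ⟨x₁, hx₁.1, hx₁.2, x₂, hx₂.1, hx₂.2, h12, fun x hx hz => hall x ⟨hx, hz⟩, ?_, ?_⟩
        · rw [abs_of_pos h1.1]
          linarith [h1.2]
        · rw [abs_of_neg (by linarith [h2.2])]
          linarith [h2.1]
      · obtain ⟨x₁, hx₁, x₂, hx₂, hall⟩ := h.exists_zeros_of_le hdδ
        have hx₁I : x₁ ∈ Icc (-r) r := ⟨by linarith [hx₁.1], by linarith [hx₁.2]⟩
        have hx₂I : x₂ ∈ Icc (-r) r := ⟨by linarith [hx₂.1], by linarith [hx₂.2]⟩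
        refine ⟨x₁, hx₁I, (hall x₁ hx₁I).2 (Or.inl rfl), x₂, hx₂I, (hall x₂ hx₂I).2 (Or.inr rfl),
          by linarith [hx₁.2, hx₂.1], fun x hx => (hall x hx).1, ?_, ?_⟩
        · rw [abs_of_pos hx₁.1]
          linarith [hx₁.2]
        · rw [abs_of_neg (by linarith [hx₂.2])]
          linarith [hx₂.1]
    have hp₁ := pDist_eq_zero_iff.2 ((hzero x₁ hx₁).2 hz₁)
    have hp₂ := pDist_eq_zero_iff.2 ((hzero x₂ hx₂).2 hz₂)
    refine ⟨x₁, x₂, h12, hx₁, hx₂, fun y _ => hp₁.trans_le (norm_nonneg _),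
      fun y _ => hp₂.trans_le (norm_nonneg _), fun x hx hmin => ?_, hb₁, hb₂, fun _ => ?_,
      fun hne => absurd ((hzero x₁ hx₁).2 hz₁) hne.2⟩
    · have : pDist (f x) = 0 := le_antisymm ((hmin x₁ hx₁).trans hp₁.le) (norm_nonneg _)
      exact hall x hx ((hzero x hx).1 (pDist_eq_zero_iff.1 this))
    · exact ⟨(h.mem_Ioo_of_gap_eq_zero hx₁ hz₁).1, (h.mem_Ioo_of_gap_eq_zero hx₂ hz₂).2⟩
  · have hdδ : d < δ := by
      by_contra! hle
      obtain ⟨x₁, hx₁, x₂, -, hall⟩ := h.exists_zeros_of_le hle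
      have hx₁I : x₁ ∈ Icc (-r) r := ⟨by linarith [hx₁.1], by linarith [hx₁.2]⟩
      exact hex ⟨x₁, hx₁I, (hall x₁ hx₁I).2 (Or.inl rfl)⟩
    have hneg : ∀ x ∈ Icc (-r) r, T x * Real.tan (0 - E x) - W x < 0 := by
      intro x hx
      by_contra! hge
      obtain ⟨z, hz, hz0⟩ := isPreconnected_Icc.intermediate_value h0I hx (h.continuousOn_gap h00)
        ⟨(h.gap_zero_neg 0).le, hge⟩
      exact hex ⟨z, hz, hz0⟩
    have hApos : ∀ x ∈ Icc (-r) r, 0 < x → 0 < E x + Real.arctan (W x / T x) := fun x hx hx0 =>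
      h.lt_add_arctan h00 hx hx0 (hneg x hx)
    have hatneg : ∀ x ∈ Icc (-r) r, x < 0 → Real.arctan (W x / T x) < 0 := fun x hx hx0 =>
      Real.arctan_lt_zero.2 (div_neg_of_pos_of_neg (h.Wpos x hx) (h.T_neg hx hx0))
    have hatpos : ∀ x ∈ Icc (-r) r, 0 < x → 0 < Real.arctan (W x / T x) := fun x hx hx0 =>
      Real.arctan_pos.2 (div_pos (h.Wpos x hx) (h.T_pos hx hx0))
    have hAneg : ∀ x ∈ Icc (-r) r, x < 0 → E x + Real.arctan (W x / T x) < 0 := fun x hx hx0 => by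
      linarith [hatneg x hx hx0, h.E_neg hx (by linarith)]
    obtain ⟨p, hp, hpmin⟩ := isCompact_Icc.exists_isMinOn ⟨0, h0I⟩ hfc
    have hpmin' : ∀ y ∈ Icc (-r) r, pDist (f p) ≤ pDist (f y) := fun y hy => hpmin hy
    set ν := pDist (f p)
    have hν0 : 0 ≤ ν := norm_nonneg _
    have hνK : ν ≤ (C + 1 / r ^ 2) * a := by
      have hxI : d + a ∈ Icc (-r) r := ⟨by linarith, by linarith⟩
      have hx0 : 0 < d + a := by linarith
      have hA := hApos _ hxI hx0
      have h1 := (hpmin' _ hxI).trans (hle _ hxI hx0.ne')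
      rw [abs_of_pos hA] at h1
      have hEx := (abs_le.1 (h.hE.upper _ hxI)).2
      rw [add_sub_cancel_left, abs_of_pos ha] at hEx
      have hTx := h.hT.near_right (d + a) hx0.le (by linarith)
      have hTx' : r ^ 2 * a ≤ T (d + a) := by
        refine le_trans ?_ hTx
        gcongr
        linarith
      have h2 : W (d + a) / T (d + a) ≤ a ^ 2 / (r ^ 2 * a) := by
        have := (h.Wlt _ hxI).le
        gcongr
      have h3 : a ^ 2 / (r ^ 2 * a) = 1 / r ^ 2 * a := by
        field_simp
      have h4 := arctan_le_self_of_nonneg (div_pos (h.Wpos _ hxI) (h.T_pos hxI hx0)).le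
      linarith
    have hνδ : ν ≤ δ := hνK.trans h.test_le_δ
    have hval : ∀ x ∈ Icc (-r) r, (∀ y ∈ Icc (-r) r, pDist (f x) ≤ pDist (f y)) →
        pDist (f x) = ν ∧ x ≠ 0 ∧ |E x + Real.arctan (W x / T x)| = ν := by
      intro x hx hmin
      have h1 : pDist (f x) = ν := le_antisymm (hmin p hp) (hpmin' x hx)
      have hx0 : x ≠ 0 := by
        rintro rfl
        linarith
      exact ⟨h1, hx0, (habs x hx hx0 (by linarith)).trans h1⟩
    have hvpos : ∀ x ∈ Icc (-r) r, (∀ y ∈ Icc (-r) r, pDist (f x) ≤ pDist (f y)) → 0 < x →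
        E x + Real.arctan (W x / T x) = ν := fun x hx hmin hx0 => by
      have := (hval x hx hmin).2.2
      rwa [abs_of_pos (hApos x hx hx0)] at this
    have hvneg : ∀ x ∈ Icc (-r) r, (∀ y ∈ Icc (-r) r, pDist (f x) ≤ pDist (f y)) → x < 0 →
        E x + Real.arctan (W x / T x) = -ν := fun x hx hmin hx0 => by
      have := (hval x hx hmin).2.2
      rw [abs_of_neg (hAneg x hx hx0)] at this
      linarith
    have hclose : ∀ x ∈ Icc (-r) r, (∀ y ∈ Icc (-r) r, pDist (f x) ≤ pDist (f y)) →
        |x - d| ≤ δ := by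
      intro x hx hmin
      have hr2 : 0 < r ^ 2 := by positivity
      rcases lt_or_ge x 0 with h1 | h1
      · have hA := hvneg x hx hmin h1
        have hat := hatneg x hx h1
        have hnear : d - r / 2 ≤ x := by
          by_contra! hlt
          linarith [h.hE.far_left x hx hlt.le, h.test']
        have := h.hE.near_left x (by linarith) hnear
        have : r ^ 2 * (d - x) ≤ r ^ 2 * δ := by linarith [h.test]
        rw [abs_sub_comm, abs_of_pos (by linarith)]
        exact le_of_mul_le_mul_left this hr2
      · rcases le_or_gt x d with h2 | h2
        · rw [abs_le]
          constructor <;> linarith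
        · have hx0 : 0 < x := by linarith
          have hA := hvpos x hx hmin hx0
          have hat := hatpos x hx hx0
          have hnear : x ≤ d + r / 2 := by
            by_contra! hlt
            linarith [h.hE.far_right x hx hlt.le, h.test']
          have := h.hE.near_right x h2.le hnear
          have : r ^ 2 * (x - d) ≤ r ^ 2 * δ := by linarith [h.test]
          rw [abs_of_pos (by linarith)]
          exact le_of_mul_le_mul_left this hr2
    have hloc : ∀ x ∈ Icc (-r) r, (∀ y ∈ Icc (-r) r, pDist (f x) ≤ pDist (f y)) →
        x ∈ Icc (-(2 * δ)) (2 * δ) := fun x hx hmin => by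
      have := abs_le.1 (hclose x hx hmin)
      exact ⟨by linarith, by linarith⟩
    have hνabs : |ν| ≤ δ := by rwa [abs_of_nonneg hν0]
    have hνabs' : |-ν| ≤ δ := by rwa [abs_neg]
    have hmid : ∀ x ∈ Icc (-r) r, ∀ y ∈ Icc (-r) r, (x + y) / 2 ∈ Icc (-r) r := fun x hx y hy =>
      ⟨by linarith [hx.1, hy.1], by linarith [hx.2, hy.2]⟩
    have huniqpos : ∀ x ∈ Icc (-r) r, (∀ y ∈ Icc (-r) r, pDist (f x) ≤ pDist (f y)) →
        ∀ z ∈ Icc (-r) r, (∀ y ∈ Icc (-r) r, pDist (f z) ≤ pDist (f y)) →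
        0 < x → x < z → False := by
      intro x hx hxm z hz hzm hx0 hxz
      have hz0 : 0 < z := by linarith
      have hw := (h.strictConcaveOn_gap hνabs hdδ).midpoint_pos (hloc x hx hxm) (hloc z hz hzm)
        hxz.ne ((h.add_arctan_eq_iff hνabs hx hx0.ne').1 (hvpos x hx hxm hx0))
        ((h.add_arctan_eq_iff hνabs hz hz0.ne').1 (hvpos z hz hzm hz0))
      have hwI := hmid x hx z hz
      have hw0 : 0 < (x + z) / 2 := by linarith
      have h1 := h.add_arctan_lt hνabs hwI hw0 hw
      have h2 := (hpmin' _ hwI).trans (hle _ hwI hw0.ne')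
      rw [abs_of_pos (hApos _ hwI hw0)] at h2
      linarith
    have huniqneg : ∀ x ∈ Icc (-r) r, (∀ y ∈ Icc (-r) r, pDist (f x) ≤ pDist (f y)) →
        ∀ z ∈ Icc (-r) r, (∀ y ∈ Icc (-r) r, pDist (f z) ≤ pDist (f y)) →
        z < 0 → x < z → False := by
      intro x hx hxm z hz hzm hz0 hxz
      have hx0 : x < 0 := by linarith
      have hw := (h.strictConcaveOn_gap hνabs' hdδ).midpoint_pos (hloc x hx hxm) (hloc z hz hzm)
        hxz.ne ((h.add_arctan_eq_iff hνabs' hx hx0.ne).1 (hvneg x hx hxm hx0))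
        ((h.add_arctan_eq_iff hνabs' hz hz0.ne).1 (hvneg z hz hzm hz0))
      have hwI := hmid x hx z hz
      have hw0 : (x + z) / 2 < 0 := by linarith
      have h1 := h.lt_add_arctan_of_neg hνabs' hwI hw0 hw
      have h2 := (hpmin' _ hwI).trans (hle _ hwI hw0.ne)
      rw [abs_of_neg (hAneg _ hwI hw0)] at h2
      linarith
    obtain ⟨x₁, ⟨hx₁, hm₁⟩, x₂, ⟨hx₂, hm₂⟩, h12, hall⟩ := exists_eq_pair_of_no_three
      (X := {x | x ∈ Icc (-r) r ∧ ∀ y ∈ Icc (-r) r, pDist (f x) ≤ pDist (f y)})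
      ⟨p, hp, hpmin'⟩ fun x hx y hy z hz hxy hyz => by
        rcases lt_or_gt_of_ne (hval y hy.1 hy.2).2.1 with h1 | h1
        · exact huniqneg x hx.1 hx.2 y hy.1 hy.2 h1 hxy
        · exact huniqpos y hy.1 hy.2 z hz.1 hz.2 h1 hyz
    refine ⟨x₁, x₂, h12, hx₁, hx₂, hm₁, hm₂, fun x hx hmin => hall x ⟨hx, hmin⟩, ?_, ?_,
      fun hz => absurd ⟨x₁, hx₁, (hzero x₁ hx₁).1 hz.1⟩ hex, fun ⟨heq, hne⟩ => ?_⟩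
    · have := hloc x₁ hx₁ hm₁
      rw [abs_lt]
      exact ⟨by linarith [this.1], by linarith [this.2]⟩
    · linarith [hclose x₂ hx₂ hm₂]
    · by_contra hne12
      have hlt : x₁ < x₂ := lt_of_le_of_ne h12 hne12
      obtain ⟨hp₁, hx₁0, -⟩ := hval x₁ hx₁ hm₁
      obtain ⟨-, hx₂0, -⟩ := hval x₂ hx₂ hm₂
      have hx₁n : x₁ < 0 := by
        rcases lt_or_gt_of_ne hx₁0 with h1 | h1
        · exact h1
        · exact (huniqpos x₁ hx₁ hm₁ x₂ hx₂ hm₂ h1 hlt).elim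
      have hx₂p : 0 < x₂ := by
        rcases lt_or_gt_of_ne hx₂0 with h1 | h1
        · exact (huniqneg x₁ hx₁ hm₁ x₂ hx₂ hm₂ h1 hlt).elim
        · exact h1
      rw [hf x₁ hx₁ hx₁0, hf x₂ hx₂ hx₂0, hvneg x₁ hx₁ hm₁ hx₁n, hvpos x₂ hx₂ hm₂ hx₂p, neg_neg,
        ← sub_eq_zero, ← AddCircle.coe_sub, ← pDist_eq_zero_iff, sub_neg_eq_add,
        pDist_eq_abs (by rw [abs_of_nonneg (by linarith)]; linarith), abs_eq_zero] at heq
      refine hne (pDist_eq_zero_iff.1 ?_)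
      linarith

lemma exists_forall_scale_bounds (C M m r β : ℝ) (hr : 0 < r) (hm : 0 < m) (hβ : β < 1) :
    ∃ L₀ > r⁻¹, ∀ l ≥ L₀, 1 ≤ l ∧ l ^ (-(3 : ℝ) / 4) ≤ r / 16 ∧
      (3 + 2 * M * C) * l⁻¹ < r ^ 4 * (l ^ (-(3 : ℝ) / 4) - l⁻¹) ∧
      (2 * M * (3 * C + 1) + 2 * M ^ 2) * l ^ (-(3 : ℝ) / 4) + 8 * (l ^ (β - 1)) ^ 2 < 2 * r ^ 4 ∧
      (C + 1 / r ^ 2) * l⁻¹ ≤ r ^ 2 * l ^ (-(3 : ℝ) / 4) ∧ (C + 1 / r ^ 2) * l⁻¹ < m := by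
  have t1 : Filter.Tendsto (fun l : ℝ => l ^ (-(3 : ℝ) / 4)) Filter.atTop (nhds 0) := by
    simpa [neg_div] using tendsto_rpow_neg_atTop (show (0 : ℝ) < 3 / 4 by norm_num)
  have t2 : Filter.Tendsto (fun l : ℝ => l ^ (-(1 / 4 : ℝ))) Filter.atTop (nhds 0) :=
    tendsto_rpow_neg_atTop (by norm_num)
  have t3 : Filter.Tendsto (fun l : ℝ => l ^ (β - 1)) Filter.atTop (nhds 0) := by
    simpa using tendsto_rpow_neg_atTop (show 0 < 1 - β by linarith)
  have t4 : Filter.Tendsto (fun l : ℝ => l⁻¹) Filter.atTop (nhds 0) := tendsto_inv_atTop_zero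
  have e1 := t1.eventually_lt_const (show 0 < r / 16 by positivity)
  have e2 := (t2.const_mul (3 + 2 * M * C + r ^ 4)).eventually_lt_const
    (show (3 + 2 * M * C + r ^ 4) * 0 < r ^ 4 by rw [mul_zero]; positivity)
  have e3 := ((t1.const_mul (2 * M * (3 * C + 1) + 2 * M ^ 2)).add
    ((t3.pow 2).const_mul 8)).eventually_lt_const
    (show (2 * M * (3 * C + 1) + 2 * M ^ 2) * 0 + 8 * 0 ^ 2 < 2 * r ^ 4 by
      norm_num; positivity)
  have e4 := (t2.const_mul (C + 1 / r ^ 2)).eventually_lt_const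
    (show (C + 1 / r ^ 2) * 0 < r ^ 2 by rw [mul_zero]; positivity)
  have e5 := (t4.const_mul (C + 1 / r ^ 2)).eventually_lt_const
    (show (C + 1 / r ^ 2) * 0 < m by rw [mul_zero]; exact hm)
  obtain ⟨L, hL⟩ := Filter.eventually_atTop.1 (e1.and (e2.and (e3.and (e4.and e5))))
  refine ⟨max L (r⁻¹ + 1), lt_max_of_lt_right (by linarith), fun l hl => ?_⟩
  obtain ⟨h1, h2, h3, h4, h5⟩ := hL l ((le_max_left _ _).trans hl)
  have hri : 0 < r⁻¹ := inv_pos.2 hr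
  have hl1 : 1 ≤ l := by linarith [(le_max_right L (r⁻¹ + 1)).trans hl]
  have hl0 : 0 < l := by linarith
  have hδ : 0 < l ^ (-(3 : ℝ) / 4) := Real.rpow_pos_of_pos hl0 _
  have hinv : l⁻¹ = l ^ (-(3 : ℝ) / 4) * l ^ (-(1 / 4 : ℝ)) := by
    rw [← Real.rpow_add hl0, ← Real.rpow_neg_one]
    norm_num
  refine ⟨hl1, h1.le, ?_, h3, ?_, h5⟩
  · rw [hinv]
    nlinarith
  · rw [hinv]
    nlinarith

lemma hasDerivAt_inv_sq {l : ℝ → ℝ} {l' x : ℝ} (h : HasDerivAt l l' x) (h0 : l x ≠ 0) :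
    HasDerivAt (fun y => (l y ^ 2)⁻¹) (-2 * l' / l x ^ 3) x := by
  refine ((h.fun_pow 2).fun_inv (pow_ne_zero 2 h0)).congr_deriv ?_
  push_cast
  field_simp

lemma hasDerivAt_deriv_inv_sq {l l₁ : ℝ → ℝ} {l₂ x : ℝ} (h : HasDerivAt l (l₁ x) x)
    (h' : HasDerivAt l₁ l₂ x) (h0 : l x ≠ 0) :
    HasDerivAt (fun y => -2 * l₁ y / l y ^ 3) (6 * l₁ x ^ 2 / l x ^ 4 - 2 * l₂ / l x ^ 3) x := by
  refine ((h'.const_mul (-2)).fun_div (h.fun_pow 3) (pow_ne_zero 3 h0)).congr_deriv ?_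
  push_cast
  field_simp
  ring

lemma abs_deriv_inv_sq_le {y y₁ l₀ β : ℝ} (hβ : β ≤ 1) (hl₀ : 1 ≤ l₀) (hy : l₀ < y)
    (h₁ : |y₁| < y ^ (1 + β)) : |-2 * y₁ / y ^ 3| ≤ 2 * l₀⁻¹ := by
  have hy1 : 1 ≤ y := hl₀.trans hy.le
  have hy0 : 0 < y := by linarith
  have h2 : y ^ (1 + β) ≤ y ^ 2 := by
    rw [← Real.rpow_natCast]
    exact Real.rpow_le_rpow_of_exponent_le hy1 (by push_cast; linarith)
  calc |-2 * y₁ / y ^ 3| = 2 * |y₁| / y ^ 3 := by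
        rw [abs_div, abs_mul, abs_of_pos (pow_pos hy0 3)]
        norm_num
    _ ≤ 2 * y ^ 2 / y ^ 3 := by gcongr; linarith
    _ = 2 * y⁻¹ := by field_simp
    _ ≤ 2 * l₀⁻¹ := by gcongr

lemma abs_deriv_deriv_inv_sq_le {y y₁ y₂ l₀ β : ℝ} (hβ0 : 0 ≤ β) (hβ : β ≤ 1) (hl₀ : 1 ≤ l₀)
    (hy : l₀ < y) (h₁ : |y₁| < y ^ (1 + β)) (h₂ : |y₂| < y ^ (1 + β)) :
    |6 * y₁ ^ 2 / y ^ 4 - 2 * y₂ / y ^ 3| ≤ 8 * (l₀ ^ (β - 1)) ^ 2 := by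
  have hy1 : 1 ≤ y := hl₀.trans hy.le
  have hy0 : 0 < y := by linarith
  set p := y ^ (β - 1) with hp
  have hp0 : 0 < p := Real.rpow_pos_of_pos hy0 _
  have hpy : y ^ (1 + β) = p * y ^ 2 := by
    rw [hp, ← Real.rpow_natCast, ← Real.rpow_add hy0]
    congr 1
    push_cast
    ring
  have hpi : y⁻¹ ≤ p := by
    rw [← Real.rpow_neg_one]
    exact Real.rpow_le_rpow_of_exponent_le hy1 (by linarith)
  have hpl : p ≤ l₀ ^ (β - 1) :=
    Real.rpow_le_rpow_of_nonpos (by linarith) hy.le (by linarith)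
  rw [hpy] at h₁ h₂
  calc |6 * y₁ ^ 2 / y ^ 4 - 2 * y₂ / y ^ 3|
      ≤ |6 * y₁ ^ 2 / y ^ 4| + |2 * y₂ / y ^ 3| := abs_sub _ _
    _ = 6 * |y₁| ^ 2 / y ^ 4 + 2 * |y₂| / y ^ 3 := by
        rw [abs_div, abs_div, abs_mul, abs_mul, abs_of_pos (pow_pos hy0 3),
          abs_of_pos (pow_pos hy0 4), abs_pow]
        norm_num
    _ ≤ 6 * (p * y ^ 2) ^ 2 / y ^ 4 + 2 * (p * y ^ 2) / y ^ 3 := by gcongr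
    _ = 6 * p ^ 2 + 2 * p * y⁻¹ := by field_simp
    _ ≤ 6 * p ^ 2 + 2 * p * p := by gcongr
    _ = 8 * p ^ 2 := by ring
    _ ≤ 8 * (l₀ ^ (β - 1)) ^ 2 := by gcongr

lemma arctan_sub_pi_div_two_coe {y : ℝ} (hy : y ≠ 0) :
    ((Real.arctan y - π / 2 : ℝ) : AddCircle π) = ((-Real.arctan y⁻¹ : ℝ) : AddCircle π) := by
  rcases hy.lt_or_gt with h | h
  · rw [← coe_sub_pi (-Real.arctan y⁻¹), Real.arctan_inv_of_neg h]
    congr 1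
    ring
  · rw [Real.arctan_inv_of_pos h]
    congr 1
    ring

lemma tan_sub_of_coe_eq_zero {b : ℝ} (hb : (b : AddCircle π) = 0) (a : ℝ) :
    Real.tan (a - b) = Real.tan a := by
  obtain ⟨n, rfl⟩ := (AddCircle.coe_eq_zero_iff π).1 hb
  rw [zsmul_eq_mul, Real.tan_sub_int_mul_pi]

lemma TypeOnePlus.branchPair {C c r l₀ β d : ℝ} {l f₁ f₂ : ℝ → ℝ} (hC : 0 < C) (hc : 0 < c)
    (hβ0 : 0 < β) (hβ : β < 1) (hr : 0 < r) (hr1 : r < 1) (hCr : C * r ≤ 1 / 16)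
    (hl : ContDiffOn ℝ 2 l (Metric.closedBall 0 r))
    (hlb : ∀ x ∈ Metric.closedBall (0 : ℝ) r, l₀ < l x ∧
      |deriv l x| < l x ^ ((1 : ℝ) + β) ∧ |iteratedDeriv 2 l x| < l x ^ ((1 : ℝ) + β))
    (h₁ : TypeOnePlus C c r 0 0 f₁) (hd : 0 ≤ d) (h₂ : TypeOnePlus C c r 0 d f₂)
    (hl₀ : 1 ≤ l₀) (hδr : l₀ ^ (-(3 : ℝ) / 4) ≤ r / 16)
    (slope : (3 + 2 * (2 * C + 4 * C ^ 2) * C) * l₀⁻¹ < r ^ 4 * (l₀ ^ (-(3 : ℝ) / 4) - l₀⁻¹))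
    (conc : (2 * (2 * C + 4 * C ^ 2) * (3 * C + 1) + 2 * (2 * C + 4 * C ^ 2) ^ 2)
      * l₀ ^ (-(3 : ℝ) / 4) + 8 * (l₀ ^ (β - 1)) ^ 2 < 2 * r ^ 4)
    (test : (C + 1 / r ^ 2) * l₀⁻¹ ≤ r ^ 2 * l₀ ^ (-(3 : ℝ) / 4))
    (test' : (C + 1 / r ^ 2) * l₀⁻¹ < min (1 / 2) c * r ^ 3) :
    ∃ T₁ T₂ E₁ E₂ W₁ W₂ : ℝ → ℝ, BranchPair C (2 * C + 4 * C ^ 2) (min (1 / 2) c * r ^ 3) r d l₀⁻¹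
      (l₀ ^ (-(3 : ℝ) / 4)) (8 * (l₀ ^ (β - 1)) ^ 2) (fun x => Real.tan (f₁ x)) T₁ T₂
      (fun x => f₂ x - f₂ d) E₁ E₂ (fun x => (l x ^ 2)⁻¹) W₁ W₂ := by
  have hm : 0 < min (1 / 2) c * r ^ 3 := by positivity
  have hdr : d ≤ r / 3 := by
    have h3 := h₂.1.2.2.1
    rw [Real.closedBall_eq_Icc] at h3
    linarith [h3.2]
  have hF := h₁.branch hr hCr
  have hE := h₂.branch hr hCr
  have hT := hF.tan hC hr hm (by rw [abs_zero]; positivity) fun x hx => by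
    have h0 := hF.upper x hx
    have h0' : |x - 0| ≤ r := by rw [sub_zero]; exact abs_le.2 hx
    nlinarith
  simp only [tan_sub_of_coe_eq_zero h₁.1.2.2.2.1] at hT
  simp only [Real.closedBall_eq_Icc, zero_sub, zero_add] at hl hlb
  have hpos : ∀ x ∈ Icc (-r) r, 0 < l x := fun x hx => by linarith [(hlb x hx).1]
  have hat : ∀ x ∈ Ioo (-r) r, ContDiffAt ℝ 2 l x := fun x hx =>
    hl.contDiffAt (Icc_mem_nhds hx.1 hx.2)
  have hd1 : ∀ x ∈ Ioo (-r) r, HasDerivAt l (deriv l x) x := fun x hx =>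
    ((hat x hx).differentiableAt (by norm_num)).hasDerivAt
  have hd2 : ∀ x ∈ Ioo (-r) r, HasDerivAt (deriv l) (deriv (deriv l) x) x := fun x hx =>
    (((hat x hx).derivWithin (m := 1) (by norm_num)).differentiableAt (by norm_num)).hasDerivAt
  refine ⟨_, _, _, _, _, _, {
    hT := hT, hE := hE, hEs := ?_, Wcont := ?_,
    Wd1 := fun x hx => hasDerivAt_inv_sq (hd1 x hx) (hpos x (Ioo_subset_Icc_self hx)).ne'
    Wd2 := fun x hx => hasDerivAt_deriv_inv_sq (hd1 x hx) (hd2 x hx)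
      (hpos x (Ioo_subset_Icc_self hx)).ne'
    Wpos := fun x hx => inv_pos.2 (pow_pos (hpos x hx) 2)
    Wlt := ?_
    W1le := fun x hx => abs_deriv_inv_sq_le hβ.le hl₀ (hlb x (Ioo_subset_Icc_self hx)).1
      (hlb x (Ioo_subset_Icc_self hx)).2.1
    W2le := fun x hx => ?_
    hM := rfl, hC := hC, hm := hm, hr := hr, hr1 := hr1, hd0 := hd, hdr := hdr
    ha := inv_pos.2 (by linarith), hδr := hδr, slope := slope, conc := conc, test := test
    test' := test' }⟩
  · intro x hx
    have h0 := hE.upper x hx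
    have h0' : |x - d| ≤ 2 * r := abs_le.2 ⟨by linarith [hx.1], by linarith [hx.2]⟩
    nlinarith
  · exact (hl.continuousOn.pow 2).inv₀ fun x hx => (pow_pos (hpos x hx) 2).ne'
  · intro x hx
    rw [inv_pow]
    exact inv_strictAnti₀ (by positivity) (pow_lt_pow_left₀ (hlb x hx).1 (by linarith) two_ne_zero)
  · have h2 := (hlb x (Ioo_subset_Icc_self hx)).2.2
    rw [iteratedDeriv_succ, iteratedDeriv_one] at h2
    exact abs_deriv_deriv_inv_sq_le hβ0.le hβ.le hl₀ (hlb x (Ioo_subset_Icc_self hx)).1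
      (hlb x (Ioo_subset_Icc_self hx)).2.1 h2

/-- Location of the minimizers of a type III function
f = arctan(l²·tan f₁) - π/2 + f₂ (f₁ of type I₊ with zero 0, f₂ of type I₋ with zero
d ∈ [0, 2r/3], l > l₀ with |l^{(m)}| < l^{1+β}): the set X of minimizers of |f| (distance in
ℝ/πℤ) consists of at most two points x₁ ≤ x₂; |x₁| < C′ l₀^{-3/4} and |x₂ - d| < C′ l₀^{-3/4};
if f(x₁) = f(x₂) = 0 then 0 < x₁ ≤ x₂ < d; and if f(x₁) = f(x₂) ≠ 0 then x₁ = x₂. -/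
theorem typeIII_minimizers (C c β : ℝ) (hC : 0 < C) (hc : 0 < c) (hβ : 0 < β) (hβ1 : β < 1) :
    ∃ C' > (0 : ℝ), ∃ r₀ ∈ Set.Ioo (0 : ℝ) 1, ∀ r ∈ Set.Ioo (0 : ℝ) r₀,
    ∃ L₀ > r⁻¹, ∀ l₀ ≥ L₀, ∀ (l f₁ f₂ f : ℝ → ℝ) (d : ℝ),
      ContDiffOn ℝ 2 l (Metric.closedBall 0 r) →
      (∀ x ∈ Metric.closedBall (0 : ℝ) r, l₀ < l x ∧
        |deriv l x| < l x ^ ((1 : ℝ) + β) ∧ |iteratedDeriv 2 l x| < l x ^ ((1 : ℝ) + β)) →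
      TypeOnePlus C c r 0 0 f₁ → 0 ≤ d → d ≤ 2 * r / 3 → TypeOneMinus C c r 0 d f₂ →
      (∀ x, f x = Real.arctan (l x ^ 2 * Real.tan (f₁ x)) - π / 2 + f₂ x) →
      ∃ x₁ x₂ : ℝ, x₁ ≤ x₂ ∧
        x₁ ∈ Metric.closedBall (0 : ℝ) r ∧ x₂ ∈ Metric.closedBall (0 : ℝ) r ∧
        (∀ y ∈ Metric.closedBall (0 : ℝ) r, pDist (f x₁) ≤ pDist (f y)) ∧
        (∀ y ∈ Metric.closedBall (0 : ℝ) r, pDist (f x₂) ≤ pDist (f y)) ∧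
        (∀ x ∈ Metric.closedBall (0 : ℝ) r,
          (∀ y ∈ Metric.closedBall (0 : ℝ) r, pDist (f x) ≤ pDist (f y)) → x = x₁ ∨ x = x₂) ∧
        |x₁| < C' * l₀ ^ (-(3 : ℝ) / 4) ∧ |x₂ - d| < C' * l₀ ^ (-(3 : ℝ) / 4) ∧
        (((f x₁ : AddCircle π) = 0 ∧ (f x₂ : AddCircle π) = 0) → 0 < x₁ ∧ x₂ < d) ∧
        (((f x₁ : AddCircle π) = (f x₂ : AddCircle π) ∧ (f x₁ : AddCircle π) ≠ 0) →
          x₁ = x₂) := by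
  have hr₀ : 0 < min (1 / 2) (1 / (16 * C)) := by positivity
  refine ⟨3, by norm_num, min (1 / 2) (1 / (16 * C)),
    ⟨hr₀, (min_le_left _ _).trans_lt (by norm_num)⟩, fun r ⟨hr, hrlt⟩ => ?_⟩
  have hr1 : r < 1 := hrlt.trans ((min_le_left _ _).trans_lt (by norm_num))
  have hCr : C * r ≤ 1 / 16 := by
    have := (hrlt.trans_le (min_le_right _ _)).le
    rw [le_div_iff₀ (by positivity)] at this
    linarith
  obtain ⟨L₀, hL₀, hL⟩ := exists_forall_scale_bounds C (2 * C + 4 * C ^ 2) (min (1 / 2) c * r ^ 3)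
    r β hr (by positivity) hβ1
  refine ⟨L₀, hL₀, fun l₀ hl₀ l f₁ f₂ f d hl hlb h₁ hd _ h₂ hf => ?_⟩
  obtain ⟨hl1, hδr, slope, conc, test, test'⟩ := hL l₀ hl₀
  have h₂' : TypeOnePlus C c r 0 d (-f₂) := by
    refine ⟨h₂.1.neg, ?_⟩
    rw [deriv.neg]
    exact neg_pos.2 h₂.2
  obtain ⟨T₁, T₂, E₁, E₂, W₁, W₂, h⟩ := TypeOnePlus.branchPair hC hc hβ hβ1 hr hr1 hCr hl hlb h₁ hd
    h₂' hl1 hδr slope conc test test'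
  have hf₂ : ∀ x, (f₂ x : AddCircle π) = ((-((-f₂) x - (-f₂) d) : ℝ) : AddCircle π) := by
    intro x
    rw [show -((-f₂) x - (-f₂) d) = f₂ x - f₂ d by simp; ring, AddCircle.coe_sub,
      h₂.1.2.2.2.1, sub_zero]
  simp only [Real.closedBall_eq_Icc, zero_sub, zero_add] at hl hlb ⊢
  have hlpos : ∀ x ∈ Icc (-r) r, 0 < l x := fun x hx => by linarith [(hlb x hx).1]
  refine h.exists_minimizers ?_ (fun x hx hx0 => ?_) ?_
  · have hf₂c : ContinuousOn f₂ (Icc (-r) r) := by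
      simpa [Real.closedBall_eq_Icc] using h₂.1.1.continuousOn
    have hfc : ContinuousOn f (Icc (-r) r) := by
      rw [show f = fun x => Real.arctan (l x ^ 2 * Real.tan (f₁ x)) - π / 2 + f₂ x from funext hf]
      exact ((Real.continuous_arctan.comp_continuousOn
        ((hl.continuousOn.pow 2).mul h.hT.cont)).sub continuousOn_const).add hf₂c
    exact (continuous_norm.comp (AddCircle.continuous_mk' π)).comp_continuousOn hfc
  · have hT0 : Real.tan (f₁ x) ≠ 0 := by
      rcases hx0.lt_or_gt with h0 | h0
      · exact (h.T_neg hx h0).ne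
      · exact (h.T_pos hx h0).ne'
    rw [hf, AddCircle.coe_add, arctan_sub_pi_div_two_coe (mul_ne_zero (pow_pos (hlpos x hx) 2).ne'
      hT0), hf₂, ← AddCircle.coe_add]
    congr 1
    rw [mul_inv, div_eq_mul_inv]
    ring
  · rw [hf, h.T_zero, mul_zero, Real.arctan_zero, AddCircle.coe_add, hf₂, ← AddCircle.coe_add]
    congr 1
    ring
end
end
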